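/- arXiv:2005.11956 — 2 statements merged into one kernel-verified Lean document; each statement's English description precedes it below -/
import Mathlib

section
/- Let p_1,…,p_m ∈ ℕ with each p_i ≥ 2 and Σ_{i=1}^m 1/p_i < m−1. Then the normalised first Betti number of a uniformly random index n subgroup of Γ_{p_1,…,p_m} converges in probability to m−1−Σ_{i=1}^m 1/p_i: for every ε > 0, ℙ[ | b_1(H_n)/n − (m−1−Σ_{i=1}^m 1/p_i) | < ε ] → 1 as n → ∞, where b_1(H) := dim_ℚ( Ab(H) ⊗_ℤ ℚ ) is the first Betti number of the group H, Ab(H) denoting its abelianization. -/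
open Filter Topology Asymptotics
open scoped TensorProduct

/-- the relations `x_i ^ p_i = x_j ^ p_j` defining `Γ_{p_1,…,p_m}` -/
def torusRels (m : ℕ) (p : Fin m → ℕ) : Set (FreeGroup (Fin m)) :=
  {w : FreeGroup (Fin m) | ∃ i j : Fin m, w = FreeGroup.of i ^ p i * (FreeGroup.of j ^ p j)⁻¹}

/-- the group `Γ_{p_1,…,p_m} = ⟨x_1,…,x_m ∣ x_1^{p_1} = ⋯ = x_m^{p_m}⟩` -/
abbrev TorusKnotGroup (m : ℕ) (p : Fin m → ℕ) : Type :=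
  PresentedGroup (torusRels m p)

/-- the probability that a uniformly random index `n` subgroup of `G` satisfies `P` -/
noncomputable def subgroupProb (G : Type*) [Group G] (n : ℕ) (P : Subgroup G → Prop) : ℝ :=
  (Nat.card {H : Subgroup G // H.index = n ∧ P H} : ℝ) /
    (Nat.card {H : Subgroup G // H.index = n} : ℝ)

/-- the first Betti number `b_1(H) = dim_ℚ (Ab(H) ⊗_ℤ ℚ)` of a group `H` -/
noncomputable def betti1 {G : Type*} [Group G] (H : Subgroup G) : ℕ :=
  Module.finrank ℚ (ℚ ⊗[ℤ] (Additive (Abelianization H)))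


/-- number of cycles (including fixed points) of a permutation -/
noncomputable def cyc {X : Type*} (x : Equiv.Perm X) : ℕ :=
  Nat.card (Quotient (Equiv.Perm.SameCycle.setoid x))

lemma inv_of_sameCycle {X α : Type*} (x : Equiv.Perm X) (f : X → α) (hf : ∀ a, f (x a) = f a)
    {a b : X} (h : x.SameCycle a b) : f a = f b := by
  obtain ⟨k, rfl⟩ := h
  have hn : ∀ (n : ℕ) (a : X), f ((x ^ n) a) = f a := by
    intro n
    induction n with
    | zero => intro a; simp
    | succ n ih => intro a; rw [pow_succ', Equiv.Perm.mul_apply, hf, ih]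
  obtain ⟨n, rfl | rfl⟩ := k.eq_nat_or_neg
  · rw [zpow_natCast, hn]
  · rw [← hn n ((x ^ (-(n:ℤ))) a)]
    simp

/-- functions invariant under a permutation are functions on the set of cycles -/
def invEquiv {X : Type*} (α : Type*) (x : Equiv.Perm X) :
    {f : X → α // ∀ a, f (x a) = f a} ≃ (Quotient (Equiv.Perm.SameCycle.setoid x) → α) where
  toFun f := Quotient.lift f.1 (fun _ _ h => inv_of_sameCycle x f.1 f.2 h)
  invFun g := ⟨fun a => g (Quotient.mk _ a), fun a => by
    exact congrArg g (Quotient.sound ⟨-1, by simp⟩)⟩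
  left_inv f := by ext a; rfl
  right_inv g := by ext q; induction q using Quotient.inductionOn; rfl

lemma exists_perm_comp {X β : Type*} [Fintype X] [DecidableEq β] (f g : X → β)
    (h : Multiset.map f Finset.univ.val = Multiset.map g Finset.univ.val) :
    ∃ σ : Equiv.Perm X, ∀ a, g (σ a) = f a := by
  classical
  have hc : ∀ b, Nonempty ({a // f a = b} ≃ {a // g a = b}) := by
    intro b
    refine ⟨Fintype.equivOfCardEq ?_⟩
    have := congrArg (Multiset.count b) h
    rw [Multiset.count_map, Multiset.count_map] at this
    rw [Fintype.card_subtype, Fintype.card_subtype]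
    simp only [Finset.card, Finset.filter_val]
    simpa [eq_comm] using this
  let e := fun b => (hc b).some
  refine ⟨(Equiv.sigmaFiberEquiv f).symm.trans
    ((Equiv.sigmaCongrRight fun b => (e b)).trans (Equiv.sigmaFiberEquiv g)), fun a => ?_⟩
  simp [Equiv.sigmaFiberEquiv]
  exact (e (f a) ⟨a, rfl⟩).2

lemma sum_pow_cyc (n t : ℕ) :
    ∑ x : Equiv.Perm (Fin n), t ^ cyc x ≤ (n + t - 1).choose n * n.factorial := by
  classical
  let _ : MulAction (Equiv.Perm (Fin n)) (Fin n → Fin t) := arrowAction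
  have key := MulAction.sum_card_fixedBy_eq_card_orbits_mul_card_group (Equiv.Perm (Fin n)) (Fin n → Fin t)
  have h1 : ∀ x : Equiv.Perm (Fin n), Fintype.card (MulAction.fixedBy (Fin n → Fin t) x) = t ^ cyc x := by
    intro x
    have e : MulAction.fixedBy (Fin n → Fin t) x ≃ {f : Fin n → Fin t // ∀ a, f (x a) = f a} := by
      refine Equiv.subtypeEquivRight fun f => ?_
      rw [MulAction.mem_fixedBy]
      constructor
      · intro h a
        have := congrFun h (x a)
        change f (x⁻¹ • x a) = _ at this
        simpa using this.symm
      · intro h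
        funext a
        change f (x⁻¹ • a) = f a
        rw [← h]; simp
    rw [← Nat.card_eq_fintype_card, Nat.card_congr (e.trans (invEquiv (Fin t) x)), Nat.card_fun]
    simp [cyc]
  rw [Finset.sum_congr rfl (fun x _ => h1 x)] at key
  rw [key, Fintype.card_perm, Fintype.card_fin]
  apply Nat.mul_le_mul_right
  have h2 : Fintype.card (Sym (Fin t) n) = (n + t - 1).choose n := by
    rw [Sym.card_sym_eq_choose, Fintype.card_fin, add_comm]
  rw [← h2]
  refine Fintype.card_le_of_injective (Quotient.lift (fun f : Fin n → Fin t =>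
    (⟨Multiset.map f Finset.univ.val, by simp⟩ : Sym (Fin t) n)) ?_) ?_
  · rintro f g ⟨σ, rfl⟩
    apply Subtype.ext
    change Multiset.map (g ∘ (σ⁻¹ : Equiv.Perm (Fin n))) Finset.univ.val
      = Multiset.map g Finset.univ.val
    rw [← Multiset.map_map]
    congr 1
    simp
  · intro f g
    induction f using Quotient.inductionOn
    induction g using Quotient.inductionOn
    rename_i f g
    intro h
    have h' := congrArg Subtype.val h
    change Multiset.map f Finset.univ.val = Multiset.map g Finset.univ.val at h'
    obtain ⟨σ, hσ⟩ := exists_perm_comp f g h'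
    apply Quotient.sound
    refine ⟨σ⁻¹, ?_⟩
    funext a
    change g (σ⁻¹⁻¹ • a) = f a
    rw [← hσ]; simp

/-- The number of permutations with at least `c` cycles. -/
lemma card_cyc_ge (n : ℕ) (hn : 1 ≤ n) (c : ℝ) (S : Set (Equiv.Perm (Fin n)))
    (hS : ∀ x ∈ S, c ≤ (cyc x : ℝ)) :
    (Nat.card S : ℝ) ≤ 4 ^ n * n.factorial * (n : ℝ) ^ (-c) := by
  classical
  have h0 : (0:ℝ) < n := by exact_mod_cast hn
  have h1 : ((∑ x : Equiv.Perm (Fin n), n ^ cyc x : ℕ) : ℝ) ≤ 4 ^ n * n.factorial := by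
    have := sum_pow_cyc n n
    have h2 : (n + n - 1).choose n ≤ 4 ^ n := by
      calc (n + n - 1).choose n ≤ 2 ^ (n + n - 1) := Nat.choose_le_two_pow _ _
        _ ≤ 2 ^ (2 * n) := Nat.pow_le_pow_right (by norm_num) (by omega)
        _ = 4 ^ n := by rw [pow_mul]; norm_num
    have h3 := this.trans (Nat.mul_le_mul_right _ h2)
    exact_mod_cast h3
  have h2 : (Nat.card S : ℝ) * (n : ℝ) ^ c ≤ ((∑ x : Equiv.Perm (Fin n), n ^ cyc x : ℕ) : ℝ) := by
    rw [Nat.card_eq_fintype_card, ← Set.toFinset_card]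
    push_cast
    calc (S.toFinset.card : ℝ) * (n : ℝ) ^ c = ∑ x ∈ S.toFinset, (n : ℝ) ^ c := by simp
      _ ≤ ∑ x ∈ S.toFinset, (n : ℝ) ^ cyc x := by
          refine Finset.sum_le_sum fun x hx => ?_
          rw [← Real.rpow_natCast]
          exact Real.rpow_le_rpow_of_exponent_le (by exact_mod_cast hn) (hS x (by simpa using hx))
      _ ≤ _ := Finset.sum_le_sum_of_subset_of_nonneg (Finset.subset_univ _)
          (fun _ _ _ => by positivity)
  rw [Real.rpow_neg h0.le, ← div_eq_mul_inv, le_div_iff₀ (Real.rpow_pos_of_pos h0 c)]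
  exact h2.trans h1

/-- a permutation of exponent `p` has at least `n / p` cycles -/
lemma card_le_mul_cyc {X : Type*} [Finite X] (p : ℕ) (hp : 0 < p) (x : Equiv.Perm X) (hx : x ^ p = 1) :
    Nat.card X ≤ p * cyc x := by
  classical
  have hs : Function.Surjective (fun a : Fin p × Quotient (Equiv.Perm.SameCycle.setoid x) =>
      (x ^ (a.1 : ℕ)) a.2.out) := by
    intro b
    have : x.SameCycle (Quotient.mk (Equiv.Perm.SameCycle.setoid x) b).out b :=
      Quotient.mk_out (s := Equiv.Perm.SameCycle.setoid x) b
    obtain ⟨k, hk⟩ := this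
    have hp' : (p : ℤ) ≠ 0 := by exact_mod_cast hp.ne'
    have h1 := Int.emod_nonneg k hp'
    have h2 := Int.emod_lt_of_pos k (by exact_mod_cast hp : (0:ℤ) < p)
    refine ⟨(⟨(k % p).toNat, by omega⟩, Quotient.mk _ b), ?_⟩
    simp only
    conv_rhs => rw [← hk]
    congr 1
    rw [← zpow_natCast, Int.toNat_of_nonneg h1]
    conv_rhs => rw [← Int.emod_add_mul_ediv k p, zpow_add, zpow_mul, zpow_natCast x p, hx]
    simp
  have := Nat.card_le_card_of_surjective _ hs
  simpa [cyc, Nat.card_prod] using this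

lemma cyc_conj {X Y : Type*} (e : X ≃ Y) (x : Equiv.Perm X) (y : Equiv.Perm Y)
    (h : ∀ a, e (x a) = y (e a)) : cyc x = cyc y := by
  refine Nat.card_congr (Quotient.congr e fun a b => ?_)
  have hy : y = e.permCongr x := by
    ext b; rw [Equiv.permCongr_apply, h]; simp
  change x.SameCycle a b ↔ y.SameCycle (e a) (e b)
  have hz : ∀ k : ℤ, (y ^ k) (e a) = e ((x ^ k) a) := by
    intro k
    have : y ^ k = e.permCongr (x ^ k) := by
      rw [hy]; exact (map_zpow (e.permCongrHom) x k).symm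
    rw [this, Equiv.permCongr_apply]; simp
  constructor
  · rintro ⟨k, hk⟩; exact ⟨k, by rw [hz, hk]⟩
  · rintro ⟨k, hk⟩; exact ⟨k, by rw [hz] at hk; exact e.injective hk⟩


/-- the permutation representation on the cosets, transported along a labelling -/
def stdHom {G : Type*} [Group G] {n : ℕ} (H : Subgroup G) (e : G ⧸ H ≃ Fin n) :
    G →* Equiv.Perm (Fin n) :=
  e.permCongrHom.toMonoidHom.comp (MulAction.toPermHom G (G ⧸ H))

lemma stdHom_apply {G : Type*} [Group G] {n : ℕ} (H : Subgroup G) (e : G ⧸ H ≃ Fin n) (g : G)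
    (q : G ⧸ H) : stdHom H e g (e q) = e (g • q) := by
  simp [stdHom]

lemma stdHom_inj {G : Type*} [Group G] {n : ℕ} (H H' : Subgroup G) (e : G ⧸ H ≃ Fin n)
    (e' : G ⧸ H' ≃ Fin n) (h : stdHom H e = stdHom H' e')
    (h1 : e (QuotientGroup.mk 1) = e' (QuotientGroup.mk 1)) :
    H = H' ∧ ∀ g : G, e (QuotientGroup.mk g) = e' (QuotientGroup.mk g) := by
  have key : ∀ g : G, e (QuotientGroup.mk g) = e' (QuotientGroup.mk g) := by
    intro g
    have a1 := stdHom_apply H e g (QuotientGroup.mk 1)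
    have a2 := stdHom_apply H' e' g (QuotientGroup.mk 1)
    rw [h, h1, a2] at a1
    simpa using a1.symm
  refine ⟨?_, key⟩
  ext g
  have b1 : g ∈ H ↔ e (QuotientGroup.mk g) = e (QuotientGroup.mk 1) := by
    rw [e.injective.eq_iff, eq_comm, QuotientGroup.eq]; simp
  have b2 : g ∈ H' ↔ e' (QuotientGroup.mk g) = e' (QuotientGroup.mk 1) := by
    rw [e'.injective.eq_iff, eq_comm, QuotientGroup.eq]; simp
  rw [b1, b2, key, key]

lemma index_equiv {G : Type*} [Group G] {n : ℕ} (hn : 1 ≤ n) (H : Subgroup G) (h : H.index = n) :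
    Nonempty (G ⧸ H ≃ Fin n) := by
  have : Nat.card (G ⧸ H) = n := h
  have hf : Finite (G ⧸ H) := Nat.finite_of_card_ne_zero (by omega)
  exact ⟨Finite.equivFinOfCardEq this⟩

lemma subgroups_upper {G : Type*} [Group G] {n : ℕ} (hn : 1 ≤ n)
    (S : Set (Subgroup G)) (hS : ∀ H ∈ S, H.index = n)
    (T : Set (G →* Equiv.Perm (Fin n))) (hT : T.Finite)
    (hST : ∀ H ∈ S, ∀ e : G ⧸ H ≃ Fin n, stdHom H e ∈ T) :
    S.Finite ∧ Nat.card S * n.factorial ≤ n * Nat.card T := by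
  classical
  have e0 : ∀ H : S, Nonempty (G ⧸ H.1 ≃ Fin n) := fun H => index_equiv hn H.1 (hS _ H.2)
  let e := fun H => (e0 H).some
  let F : S × Equiv.Perm (Fin n) → Fin n × T := fun a =>
    (a.2 (e a.1 (QuotientGroup.mk 1)), ⟨stdHom a.1.1 ((e a.1).trans a.2), hST _ a.1.2 _⟩)
  have hF : Function.Injective F := by
    rintro ⟨H, σ⟩ ⟨H', σ'⟩ hh
    simp only [F, Prod.mk.injEq, Subtype.mk.injEq] at hh
    obtain ⟨h1, h2⟩ := stdHom_inj H.1 H'.1 _ _ hh.2 hh.1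
    have : H = H' := Subtype.ext h1
    subst this
    simp only [Prod.mk.injEq, true_and]
    ext a
    obtain ⟨q, rfl⟩ := (e H).surjective a
    induction q using QuotientGroup.induction_on with
    | H g => exact congrArg Fin.val (h2 g)
  have : Finite T := hT
  have hfin : Finite (S × Equiv.Perm (Fin n)) := Finite.of_injective F hF
  have hS : Finite S := Finite.of_surjective (Prod.fst : S × Equiv.Perm (Fin n) → S)
    (fun s => ⟨(s, 1), rfl⟩)
  refine ⟨hS, ?_⟩
  have := Nat.card_le_card_of_injective F hF
  simpa [Nat.card_prod, Nat.card_perm, Fintype.card_perm] using this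

lemma exists_stdHom {G : Type*} [Group G] {n : ℕ} (hn : 1 ≤ n) (φ : G →* Equiv.Perm (Fin n))
    (hφ : ∀ a b, ∃ g, φ g a = b) :
    ∃ H : Subgroup G, H.index = n ∧ ∃ e : G ⧸ H ≃ Fin n, stdHom H e = φ := by
  let _ : MulAction G (Fin n) := MulAction.compHom (Fin n) φ
  have hs : ∀ (g : G) (a : Fin n), g • a = φ g a := fun g a => rfl
  have ht : MulAction.IsPretransitive G (Fin n) := ⟨fun a b => hφ a b⟩
  let a0 : Fin n := ⟨0, hn⟩
  let e : G ⧸ MulAction.stabilizer G a0 ≃ Fin n :=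
    (MulAction.orbitEquivQuotientStabilizer G a0).symm.trans
      ((Equiv.setCongr (MulAction.orbit_eq_univ G a0)).trans (Equiv.Set.univ _))
  have he : ∀ g : G, e (QuotientGroup.mk g) = φ g a0 := fun g => rfl
  refine ⟨MulAction.stabilizer G a0, ?_, e, ?_⟩
  · change Nat.card _ = n
    rw [Nat.card_congr e]; simp
  · ext g a
    obtain ⟨q, rfl⟩ := e.surjective a
    rw [stdHom_apply]
    induction q using QuotientGroup.induction_on with
    | H k =>
      have : g • (QuotientGroup.mk k : G ⧸ MulAction.stabilizer G a0) = QuotientGroup.mk (g * k) := rfl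
      rw [this, he, he]; simp

lemma subgroups_lower {G : Type*} [Group G] {n : ℕ} (hn : 1 ≤ n)
    (hfin : {H : Subgroup G | H.index = n}.Finite)
    (T : Set (G →* Equiv.Perm (Fin n)))
    (hT : ∀ φ ∈ T, ∀ a b, ∃ g, φ g a = b) :
    Nat.card T ≤ Nat.card {H : Subgroup G // H.index = n} * n.factorial := by
  classical
  have : Finite {H : Subgroup G // H.index = n} := hfin
  have e0 : ∀ H : {H : Subgroup G // H.index = n}, Nonempty (G ⧸ H.1 ≃ Fin n) :=
    fun H => index_equiv hn H.1 H.2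
  let e := fun H => (e0 H).some
  have hx : ∀ φ : T, ∃ a : {H : Subgroup G // H.index = n} × Equiv.Perm (Fin n),
      stdHom a.1.1 ((e a.1).trans a.2) = φ.1 := by
    intro φ
    obtain ⟨H, hH, f, hf⟩ := exists_stdHom hn φ.1 (hT _ φ.2)
    refine ⟨(⟨H, hH⟩, (e ⟨H, hH⟩).symm.trans f), ?_⟩
    rw [← hf]; congr 1
    ext a; simp
  choose F hF using hx
  have hinj : Function.Injective F := by
    intro φ ψ h
    apply Subtype.ext
    rw [← hF, ← hF, h]
  have := Nat.card_le_card_of_injective F hinj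
  simpa [Nat.card_prod, Nat.card_perm, Fintype.card_perm] using this


/-- model permutation: `q` cycles of length `p` and `r` fixed points -/
def rot (q p r : ℕ) : Equiv.Perm ((Fin q × ZMod p) ⊕ Fin r) :=
  Equiv.sumCongr (Equiv.prodCongr (Equiv.refl _) (Equiv.addRight 1)) (Equiv.refl _)

lemma rot_inl (q p r : ℕ) (c : Fin q) (j : ZMod p) : rot q p r (Sum.inl (c, j)) = Sum.inl (c, j + 1) := rfl
lemma rot_inr (q p r : ℕ) (b : Fin r) : rot q p r (Sum.inr b) = Sum.inr b := rfl

lemma rot_pow_inl (q p r k : ℕ) (c : Fin q) (j : ZMod p) :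
    (rot q p r ^ k) (Sum.inl (c, j)) = Sum.inl (c, j + k) := by
  induction k with
  | zero => simp
  | succ k ih => rw [pow_succ', Equiv.Perm.mul_apply, ih, rot_inl]; push_cast; rw [add_assoc]

lemma rot_pow_inr (q p r k : ℕ) (b : Fin r) :
    (rot q p r ^ k) (Sum.inr b) = Sum.inr b := by
  induction k with
  | zero => simp
  | succ k ih => rw [pow_succ', Equiv.Perm.mul_apply, ih, rot_inr]

lemma rot_pow (q p r : ℕ) : rot q p r ^ p = 1 := by
  ext a
  rcases a with ⟨c, j⟩ | b
  · rw [rot_pow_inl]; simp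
  · rw [rot_pow_inr]; simp

/-- the invariant subsets of size `s` -/
def InvSet (q p r s : ℕ) : Set (Finset ((Fin q × ZMod p) ⊕ Fin r)) :=
  {S | S.card = s ∧ ∀ a ∈ S, rot q p r a ∈ S}

lemma inv_pow_mem {X : Type*} (x : Equiv.Perm X) (S : Finset X) (h : ∀ a ∈ S, x a ∈ S) (k : ℕ) :
    ∀ a ∈ S, (x ^ k) a ∈ S := by
  induction k with
  | zero => intro a ha; simpa
  | succ k ih => intro a ha; rw [pow_succ', Equiv.Perm.mul_apply]; exact h _ (ih a ha)

lemma inv_inl (q p r s : ℕ) [NeZero p] (S : Finset ((Fin q × ZMod p) ⊕ Fin r)) (hS : S ∈ InvSet q p r s)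
    (c : Fin q) (j j' : ZMod p) (h : Sum.inl (c, j) ∈ S) : Sum.inl (c, j') ∈ S := by
  have := inv_pow_mem _ S hS.2 (j' - j).val _ h
  rw [rot_pow_inl] at this
  simpa using this

lemma card_filter_prod {α β : Type*} [Fintype α] [Fintype β] [DecidableEq α] [DecidableEq β] (A : β → Finset α) :
    (Finset.univ.filter (fun x : α × β => x.1 ∈ A x.2)).card = ∑ b, (A b).card := by
  rw [Finset.card_filter, Fintype.sum_prod_type_right]
  refine Finset.sum_congr rfl fun b _ => ?_
  simp

lemma card_InvSet (q p r s : ℕ) (hp : 2 ≤ p) (hr : r < p) :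
    (Nat.card (InvSet q p r s)) ^ p ≤ (q * p + r).choose s * 2 ^ (p * p) := by
  classical
  have : NeZero p := ⟨by omega⟩
  let A : Finset ((Fin q × ZMod p) ⊕ Fin r) → Finset (Fin q) :=
    fun S => Finset.univ.filter (fun c => Sum.inl (c, 0) ∈ S)
  let B : Finset ((Fin q × ZMod p) ⊕ Fin r) → Finset (Fin r) :=
    fun S => Finset.univ.filter (fun b => Sum.inr b ∈ S)
  have hAB : ∀ S ∈ InvSet q p r s, S = (Finset.univ.filter (fun x : Fin q × ZMod p => x.1 ∈ A S)).disjSum (B S) := by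
    intro S hS
    ext a
    rcases a with ⟨c, j⟩ | b
    · simp [A]
      exact ⟨fun h => inv_inl q p r s S hS _ _ _ h, fun h => inv_inl q p r s S hS _ _ _ h⟩
    · simp [B]
  have hcard : ∀ S ∈ InvSet q p r s, p * (A S).card + (B S).card = s := by
    intro S hS
    have h1 := hS.1
    rw [hAB S hS, Finset.card_disjSum, card_filter_prod (fun _ => A S)] at h1
    simpa [ZMod.card] using h1
  have hcA : ∀ S ∈ InvSet q p r s, (A S).card = s / p ∧ (B S).card = s % p := by
    intro S hS
    have h1 := hcard S hS
    have h2 : (B S).card < p := lt_of_le_of_lt (by simpa using Finset.card_le_univ (B S)) hr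
    rw [← h1]
    constructor
    · rw [Nat.mul_add_div (by omega), Nat.div_eq_of_lt h2, add_zero]
    · rw [Nat.mul_add_mod, Nat.mod_eq_of_lt h2]
  let F : (ZMod p → InvSet q p r s) →
      (Finset.powersetCard s (Finset.univ : Finset ((Fin q × ZMod p) ⊕ Fin r))) × (ZMod p → Finset (Fin r)) :=
    fun T => (⟨(Finset.univ.filter (fun x : Fin q × ZMod p => x.1 ∈ A (T x.2).1)).disjSum (B (T 0).1), by
      rw [Finset.mem_powersetCard]
      refine ⟨Finset.subset_univ _, ?_⟩
      rw [Finset.card_disjSum, card_filter_prod (fun j => A (T j).1)]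
      rw [Finset.sum_congr rfl (fun j _ => (hcA (T j).1 (T j).2).1), (hcA (T 0).1 (T 0).2).2]
      simp [ZMod.card, Nat.div_add_mod]⟩, fun j => B (T j).1)
  have hF : Function.Injective F := by
    intro T T' h
    simp only [F, Prod.mk.injEq, Subtype.mk.injEq] at h
    funext j
    apply Subtype.ext
    rw [hAB _ (T j).2, hAB _ (T' j).2]
    have h2 : B (T j).1 = B (T' j).1 := congrFun h.2 j
    have h1 : A (T j).1 = A (T' j).1 := by
      ext c
      have := Finset.ext_iff.1 h.1 (Sum.inl (c, j))
      simpa using this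
    rw [h1, h2]
  have := Nat.card_le_card_of_injective F hF
  rw [Nat.card_fun, Nat.card_prod, Nat.card_fun] at this
  simp only [Nat.card_eq_fintype_card, ZMod.card, Fintype.card_coe, Finset.card_powersetCard,
    Finset.card_univ, Fintype.card_sum, Fintype.card_prod, Fintype.card_fin, Fintype.card_finset] at this
  rw [← Nat.card_eq_fintype_card] at this
  refine this.trans (Nat.mul_le_mul_left _ ?_)
  rw [← pow_mul]
  exact Nat.pow_le_pow_right (by norm_num) (Nat.mul_le_mul_right _ hr.le)

/-- centraliser bound -/
lemma card_comm (q p r n : ℕ) (hp : 2 ≤ p) (hn : q * p + r = n) :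
    Nat.card {y : Equiv.Perm ((Fin q × ZMod p) ⊕ Fin r) // ∀ a, y (rot q p r a) = rot q p r (y a)}
      ≤ n ^ (q + r) := by
  classical
  have : NeZero p := ⟨by omega⟩
  let F : {y : Equiv.Perm ((Fin q × ZMod p) ⊕ Fin r) // ∀ a, y (rot q p r a) = rot q p r (y a)} →
      (Fin q ⊕ Fin r → (Fin q × ZMod p) ⊕ Fin r) :=
    fun y => Sum.elim (fun c => y.1 (Sum.inl (c, 0))) (fun b => y.1 (Sum.inr b))
  have hF : Function.Injective F := by
    rintro ⟨y, hy⟩ ⟨y', hy'⟩ h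
    apply Subtype.ext
    have hpow : ∀ (y : Equiv.Perm ((Fin q × ZMod p) ⊕ Fin r)),
        (∀ a, y (rot q p r a) = rot q p r (y a)) → ∀ (k : ℕ) a,
        y ((rot q p r ^ k) a) = (rot q p r ^ k) (y a) := by
      intro y hy k
      induction k with
      | zero => intro a; simp
      | succ k ih => intro a; rw [pow_succ', Equiv.Perm.mul_apply, hy, ih, Equiv.Perm.mul_apply]
    ext a
    rcases a with ⟨c, j⟩ | b
    · have h1 : (Sum.inl (c, j) : (Fin q × ZMod p) ⊕ Fin r) = (rot q p r ^ j.val) (Sum.inl (c, 0)) := by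
        rw [rot_pow_inl]; simp
      rw [h1]
      simp only
      rw [hpow y hy, hpow y' hy']
      congr 1
      exact congrFun h (Sum.inl c)
    · exact congrFun h (Sum.inr b)
  have := Nat.card_le_card_of_injective F hF
  rw [Nat.card_fun] at this
  simpa [ZMod.card, hn] using this

/-- double counting of labellings mapping a given set to a member of a family -/
lemma count_labellings {M : Type*} [Fintype M] [DecidableEq M] (n s : ℕ) (hM : Fintype.card M = n)
    (I : Set (Finset M)) (S : Finset (Fin n)) (hS : S.card = s) :
    n.choose s * Nat.card {e : M ≃ Fin n // S.map e.symm.toEmbedding ∈ I} ≤ n.factorial * Nat.card I := by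
  classical
  have e0 : M ≃ Fin n := Fintype.equivFinOfCardEq hM
  have hcE : Fintype.card (M ≃ Fin n) = n.factorial := by
    rw [Fintype.card_equiv e0, hM]
  have hinv : ∀ S' ∈ Finset.powersetCard s (Finset.univ : Finset (Fin n)),
      Nat.card {e : M ≃ Fin n // S'.map e.symm.toEmbedding ∈ I} =
      Nat.card {e : M ≃ Fin n // S.map e.symm.toEmbedding ∈ I} := by
    intro S' hS'
    rw [Finset.mem_powersetCard] at hS'
    have e1 : {x // x ∈ S'} ≃ {x // x ∈ S} := Fintype.equivOfCardEq (by simp [hS, hS'.2])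
    let g : Equiv.Perm (Fin n) := e1.extendSubtype
    have hg : S'.map g.toEmbedding = S := by
      apply Finset.eq_of_subset_of_card_le
      · intro a ha
        rw [Finset.mem_map] at ha
        obtain ⟨b, hb, rfl⟩ := ha
        exact e1.extendSubtype_mem b hb
      · simp [hS, hS'.2]
    refine Nat.card_congr ⟨fun e => ⟨e.1.trans g, ?_⟩, fun e => ⟨e.1.trans g.symm, ?_⟩, ?_, ?_⟩
    · have := e.2
      rw [← hg, Finset.map_map]
      convert this using 2
      ext a; simp
    · obtain ⟨e, this⟩ := e
      rw [← hg, Finset.map_map] at this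
      convert this using 2
      ext a; simp
    · intro e; ext; simp
    · intro e; ext; simp
  have h1 : ∑ S' ∈ Finset.powersetCard s (Finset.univ : Finset (Fin n)),
      Nat.card {e : M ≃ Fin n // S'.map e.symm.toEmbedding ∈ I} =
      n.choose s * Nat.card {e : M ≃ Fin n // S.map e.symm.toEmbedding ∈ I} := by
    rw [Finset.sum_congr rfl hinv]; simp
  rw [← h1]
  have h2 : ∀ S' : Finset (Fin n), Nat.card {e : M ≃ Fin n // S'.map e.symm.toEmbedding ∈ I} =
      ∑ e : M ≃ Fin n, if S'.map e.symm.toEmbedding ∈ I then 1 else 0 := by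
    intro S'
    rw [Nat.card_eq_fintype_card, Fintype.card_subtype, Finset.card_filter]
  rw [Finset.sum_congr rfl (fun S' _ => h2 S'), Finset.sum_comm, ← hcE]
  rw [← smul_eq_mul, ← Finset.card_univ, ← Finset.sum_const]
  refine Finset.sum_le_sum fun e _ => ?_
  rw [← Finset.card_filter, Nat.card_eq_fintype_card, ← Set.toFinset_card]
  refine Finset.card_le_card_of_injOn (fun S' => S'.map e.symm.toEmbedding) ?_ ?_
  · intro S' h
    simp at h ⊢
    exact h.2
  · intro S1 _ S2 _ h
    exact Finset.map_injective _ h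


lemma two_pow_le_choose (s : ℕ) : ∀ n, 2 * s ≤ n → 2 ^ s ≤ n.choose s := by
  induction s with
  | zero => intro n _; simp
  | succ s ih =>
    intro n hn
    obtain ⟨n, rfl⟩ : ∃ k, n = k + 1 := ⟨n - 1, by omega⟩
    have h1 := Nat.add_one_mul_choose_eq n s
    have h2 := ih n (by omega)
    have h3 : 2 * (s + 1) * n.choose s ≤ (n + 1) * n.choose s := Nat.mul_le_mul_right _ hn
    rw [h1] at h3
    have h4 : 2 * n.choose s ≤ (n + 1).choose (s + 1) := by
      have : (s + 1) * (2 * n.choose s) ≤ (s + 1) * (n + 1).choose (s + 1) := by linarith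
      exact Nat.le_of_mul_le_mul_left this (by omega)
    rw [pow_succ]; omega

lemma le_choose_mid (n : ℕ) : ∀ s, 0 < s → s < n → n ≤ n.choose s := by
  induction n with
  | zero => intro s _ h; omega
  | succ n ih =>
    intro s h0 h1
    obtain ⟨s, rfl⟩ : ∃ k, s = k + 1 := ⟨s - 1, by omega⟩
    rw [Nat.choose_succ_succ']
    have h3 : 1 ≤ n.choose s := Nat.choose_pos (by omega)
    rcases Nat.lt_or_ge (s + 1) n with h | h
    · have := ih (s + 1) (by omega) h; omega
    · have : n = s + 1 := by omega
      subst this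
      simp

lemma tendsto_choose_sum (α : ℝ) (hα : 0 < α) :
    Tendsto (fun n : ℕ => ∑ s ∈ Finset.Ioo 0 n, ((n.choose s : ℕ) : ℝ) ^ (-α)) atTop (𝓝 0) := by
  set r : ℝ := (2:ℝ) ^ (-(α / 2)) with hr
  have hr0 : 0 < r := by positivity
  have hr1 : r < 1 := Real.rpow_lt_one_of_one_lt_of_neg (by norm_num) (by linarith)
  have hgeo : ∀ n : ℕ, ∑ s ∈ Finset.range n, r ^ s ≤ (1 - r)⁻¹ := fun n => by
    rw [← tsum_geometric_of_lt_one hr0.le hr1]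
    exact (summable_geometric_of_lt_one hr0.le hr1).sum_le_tsum _ (fun _ _ => by positivity)
  have hb : ∀ n : ℕ, ∑ s ∈ Finset.Ioo 0 n, ((n.choose s : ℕ) : ℝ) ^ (-α) ≤
      (2 * (1 - r)⁻¹) * (n : ℝ) ^ (-(α / 2)) := by
    intro n
    have hterm : ∀ s ∈ Finset.Ioo 0 n, ((n.choose s : ℕ) : ℝ) ^ (-α) ≤
        (r ^ s + r ^ (n - s)) * (n : ℝ) ^ (-(α / 2)) := by
      intro s hs
      rw [Finset.mem_Ioo] at hs
      have hn0 : (0:ℝ) < n := by exact_mod_cast (by omega : 0 < n)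
      have hc0 : (0:ℝ) < (n.choose s : ℕ) := by exact_mod_cast Nat.choose_pos hs.2.le
      have e1 : -α = -(α/2) + -(α/2) := by ring
      rw [e1, Real.rpow_add hc0]
      have h1 : ((n.choose s : ℕ) : ℝ) ^ (-(α/2)) ≤ (n : ℝ) ^ (-(α/2)) :=
        Real.rpow_le_rpow_of_nonpos hn0 (by exact_mod_cast le_choose_mid n s hs.1 hs.2) (by linarith)
      have aux : ∀ k : ℕ, 2 ^ k ≤ n.choose s → ((n.choose s : ℕ) : ℝ) ^ (-(α/2)) ≤ r ^ k := by
        intro k hk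
        have : r ^ k = ((2:ℝ) ^ k) ^ (-(α/2)) := by
          rw [hr, ← Real.rpow_natCast, ← Real.rpow_mul (by norm_num), mul_comm,
            Real.rpow_mul (by norm_num), Real.rpow_natCast]
        rw [this]
        exact Real.rpow_le_rpow_of_nonpos (by positivity) (by exact_mod_cast hk) (by linarith)
      have h2 : ((n.choose s : ℕ) : ℝ) ^ (-(α/2)) ≤ r ^ s + r ^ (n - s) := by
        rcases Nat.le_total (2 * s) n with h | h
        · have := aux s (two_pow_le_choose s n h)
          have : 0 ≤ r ^ (n - s) := by positivity
          linarith
        · have := aux (n - s) (by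
            rw [← Nat.choose_symm hs.2.le]; exact two_pow_le_choose _ _ (by omega))
          have : 0 ≤ r ^ s := by positivity
          linarith
      exact mul_le_mul h2 h1 (by positivity) (by positivity)
    refine (Finset.sum_le_sum hterm).trans ?_
    rw [← Finset.sum_mul]
    refine mul_le_mul_of_nonneg_right ?_ (by positivity)
    rw [Finset.sum_add_distrib]
    have hsub : Finset.Ioo 0 n ⊆ Finset.range (n + 1) := by
      intro s; simp; omega
    have h1 : ∑ s ∈ Finset.Ioo 0 n, r ^ s ≤ (1 - r)⁻¹ :=
      (Finset.sum_le_sum_of_subset_of_nonneg hsub (fun _ _ _ => by positivity)).trans (hgeo _)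
    have h2 : ∑ s ∈ Finset.Ioo 0 n, r ^ (n - s) ≤ (1 - r)⁻¹ := by
      refine (Finset.sum_le_sum_of_subset_of_nonneg hsub (fun _ _ _ => by positivity)).trans ?_
      have := Finset.sum_range_reflect (fun s => r ^ s) (n + 1)
      simp only [Nat.add_sub_cancel] at this
      rw [this]
      exact hgeo _
    linarith
  have hlim : Tendsto (fun n : ℕ => (2 * (1 - r)⁻¹) * (n : ℝ) ^ (-(α / 2))) atTop (𝓝 0) := by
    have := (tendsto_rpow_neg_atTop (by linarith : 0 < α / 2)).comp tendsto_natCast_atTop_atTop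
    simpa using this.const_mul (2 * (1 - r)⁻¹)
  exact squeeze_zero (fun n => Finset.sum_nonneg fun _ _ => by positivity) hb hlim


/-- no proper nonempty invariant subset -/
def TransTuple {m n : ℕ} (x : Fin m → Equiv.Perm (Fin n)) : Prop :=
  ∀ S : Finset (Fin n), (∀ i, ∀ a ∈ S, x i a ∈ S) → S = ∅ ∨ S = Finset.univ

/-- the model set -/
abbrev MSet (n p : ℕ) : Type := (Fin (n / p) × ZMod p) ⊕ Fin (n % p)

/-- relabelled model permutation -/
def mperm (n p : ℕ) (e : MSet n p ≃ Fin n) : Equiv.Perm (Fin n) :=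
  e.permCongr (rot (n / p) p (n % p))

lemma card_Mod (n p : ℕ) [NeZero p] : Fintype.card (MSet n p) = n := by
  simp [MSet, ZMod.card, Nat.div_add_mod']

lemma count_inv (n p : ℕ) (hp : 2 ≤ p) (S : Finset (Fin n)) :
    (Nat.card {e : MSet n p ≃ Fin n // ∀ a ∈ S, mperm n p e a ∈ S} : ℝ) ≤
      n.factorial * (2 ^ p * ((n.choose S.card : ℕ) : ℝ) ^ ((1:ℝ) / p - 1)) := by
  classical
  have : NeZero p := ⟨by omega⟩
  have hS : S.card ≤ n := by simpa using Finset.card_le_univ S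
  set s := S.card with hs
  have h1 := count_labellings (M := MSet n p) n s (card_Mod n p) (InvSet (n / p) p (n % p) s) S hs.symm
  have h2 := card_InvSet (n / p) p (n % p) s hp (Nat.mod_lt _ (by omega))
  rw [Nat.div_add_mod'] at h2
  have h3 : Nat.card {e : MSet n p ≃ Fin n // ∀ a ∈ S, mperm n p e a ∈ S} ≤
      Nat.card {e : MSet n p ≃ Fin n // S.map e.symm.toEmbedding ∈ InvSet (n / p) p (n % p) s} := by
    refine Nat.card_le_card_of_injective (fun e => ⟨e.1, ?_, ?_⟩) ?_
    · simp [hs]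
    · intro a ha
      obtain ⟨b, hb, rfl⟩ := Finset.mem_map.1 ha
      have := e.2 b hb
      rw [Finset.mem_map]
      refine ⟨_, this, ?_⟩
      simp [mperm, Equiv.permCongr_apply]
    · intro e e' h
      have h' := Subtype.ext_iff.1 h
      exact Subtype.ext h'
  have hc0 : (0:ℝ) < (n.choose s : ℕ) := by exact_mod_cast Nat.choose_pos hS
  set c : ℝ := ((n.choose s : ℕ) : ℝ) with hc
  set I : ℝ := (Nat.card (InvSet (n / p) p (n % p) s) : ℝ) with hI
  have h2' : I ^ p ≤ c * 2 ^ (p * p) := by rw [hI, hc]; exact_mod_cast h2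
  have hp0 : (p:ℝ) ≠ 0 := by exact_mod_cast (by omega : p ≠ 0)
  have h4 : I ≤ 2 ^ p * c ^ ((1:ℝ) / p) := by
    have h5 : (2 ^ p * c ^ ((1:ℝ) / p)) ^ p = c * 2 ^ (p * p) := by
      rw [mul_pow, ← pow_mul, ← Real.rpow_natCast (c ^ _), ← Real.rpow_mul hc0.le,
        one_div_mul_cancel hp0, Real.rpow_one, mul_comm]
    rw [← h5] at h2'
    exact le_of_pow_le_pow_left₀ (by omega) (by positivity) h2'
  have h1' : c * (Nat.card {e : MSet n p ≃ Fin n // ∀ a ∈ S, mperm n p e a ∈ S} : ℝ) ≤ n.factorial * I := by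
    rw [hc, hI]
    exact_mod_cast (Nat.mul_le_mul_left _ h3).trans h1
  rw [Real.rpow_sub hc0, Real.rpow_one, ← mul_div_assoc, ← mul_div_assoc, le_div_iff₀ hc0, mul_comm]
  exact h1'.trans (mul_le_mul_of_nonneg_left h4 (by positivity))

lemma bad_count (m n : ℕ) (p : Fin m → ℕ) (hp : ∀ i, 2 ≤ p i) :
    (Nat.card {e : (i : Fin m) → (MSet n (p i) ≃ Fin n) // ¬ TransTuple (fun i => mperm n (p i) (e i))} : ℝ)
      ≤ (n.factorial : ℝ) ^ m * 2 ^ (∑ i, p i) *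
        ∑ s ∈ Finset.Ioo 0 n, ((n.choose s : ℕ) : ℝ) ^ (-((m:ℝ) - 1 - ∑ i, (1:ℝ) / p i)) := by
  classical
  have : ∀ i, NeZero (p i) := fun i => ⟨by have := hp i; omega⟩
  set β := ∑ i, (1:ℝ) / p i with hβ
  let g : ℕ → ℝ := fun s => if s ∈ Finset.Ioo 0 n then
    ((n.factorial : ℝ) ^ m * 2 ^ (∑ i, p i)) * ((n.choose s : ℕ) : ℝ) ^ (β - m) else 0
  let Bd : Finset (Fin n) → Finset ((i : Fin m) → (MSet n (p i) ≃ Fin n)) := fun S =>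
    Finset.univ.filter (fun e => ∀ i, ∀ a ∈ S, mperm n (p i) (e i) a ∈ S)
  let P := (Finset.univ : Finset (Finset (Fin n))).filter (fun S => S ≠ ∅ ∧ S ≠ Finset.univ)
  have h1 : Nat.card {e : (i : Fin m) → (MSet n (p i) ≃ Fin n) // ¬ TransTuple (fun i => mperm n (p i) (e i))}
      ≤ ∑ S ∈ P, (Bd S).card := by
    rw [Nat.card_eq_fintype_card, Fintype.card_subtype]
    refine le_trans (Finset.card_le_card ?_) Finset.card_biUnion_le
    intro e he
    simp only [Finset.mem_filter, Finset.mem_univ, true_and, TransTuple, not_forall, not_or] at he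
    obtain ⟨S, hS, h1, h2⟩ := he
    simp only [Finset.mem_biUnion]
    exact ⟨S, by simp [P, h1, h2], by simpa [Bd] using hS⟩
  have h2 : ∀ S ∈ P, ((Bd S).card : ℝ) ≤ g S.card := by
    intro S hS
    simp only [P, Finset.mem_filter, Finset.mem_univ, true_and] at hS
    have hS0 : 0 < S.card := Finset.card_pos.2 (Finset.nonempty_iff_ne_empty.2 hS.1)
    have hS1 : S.card < n := by
      have := Finset.card_lt_card (Finset.ssubset_univ_iff.2 hS.2)
      simpa using this
    have hc0 : (0:ℝ) < (n.choose S.card : ℕ) := by exact_mod_cast Nat.choose_pos hS1.le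
    have hb : (Bd S).card = ∏ i, Nat.card {e : MSet n (p i) ≃ Fin n // ∀ a ∈ S, mperm n (p i) e a ∈ S} := by
      rw [← Nat.card_pi]
      rw [← Fintype.card_coe, ← Nat.card_eq_fintype_card]
      refine Nat.card_congr ⟨fun e i => ⟨e.1 i, ?_⟩, fun e => ⟨fun i => (e i).1, ?_⟩, ?_, ?_⟩
      · have := e.2; simp only [Bd, Finset.mem_filter] at this; exact this.2 i
      · simp only [Bd, Finset.mem_filter]; exact ⟨Finset.mem_univ _, fun i => (e i).2⟩
      · intro e; rfl
      · intro e; rfl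
    rw [hb]
    push_cast
    refine (Finset.prod_le_prod (fun i _ => by positivity) (fun i _ => count_inv n (p i) (hp i) S)).trans ?_
    simp only [g, Finset.mem_Ioo, hS0, hS1, and_self, if_true]
    rw [Finset.prod_mul_distrib, Finset.prod_mul_distrib, Finset.prod_pow_eq_pow_sum, ← Real.rpow_sum_of_pos hc0]
    simp only [Finset.prod_const, Finset.card_univ, Fintype.card_fin, Finset.sum_sub_distrib,
      Finset.sum_const, nsmul_eq_mul, mul_one, ← hβ]
    rw [mul_assoc]
  have h3 : ∑ S ∈ P, g S.card ≤ ∑ S ∈ (Finset.univ : Finset (Fin n)).powerset, g S.card := by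
    refine Finset.sum_le_sum_of_subset_of_nonneg (by intro S _; simp) ?_
    intro S _ _
    simp only [g]; split_ifs <;> positivity
  rw [Finset.sum_powerset_apply_card] at h3
  calc _ ≤ ((∑ S ∈ P, (Bd S).card : ℕ) : ℝ) := by exact_mod_cast h1
    _ ≤ ∑ S ∈ P, g S.card := by push_cast; exact Finset.sum_le_sum h2
    _ ≤ _ := h3
    _ = ∑ s ∈ Finset.Ioo 0 n, n.choose s • g s := by
      symm
      simp only [Finset.card_univ, Fintype.card_fin]
      refine Finset.sum_subset (by intro s; simp; omega) ?_
      intro s _ hs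
      simp only [g, hs, if_false, smul_zero]
    _ = _ := by
      rw [Finset.mul_sum]
      refine Finset.sum_congr rfl fun s hs => ?_
      simp only [g, hs, if_true]
      have hc0 : (0:ℝ) < (n.choose s : ℕ) := by
        exact_mod_cast Nat.choose_pos (Finset.mem_Ioo.1 hs).2.le
      have : -((m:ℝ) - 1 - β) = (β - m) + 1 := by ring
      rw [this, Real.rpow_add_one hc0.ne', nsmul_eq_mul]
      ring

lemma trans_lower (m : ℕ) (p : Fin m → ℕ) (hp : ∀ i, 2 ≤ p i)
    (h : ∑ i, (1 : ℝ) / (p i : ℝ) < (m : ℝ) - 1) :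
    ∀ᶠ n : ℕ in atTop, (n.factorial : ℝ) ^ m / 2 *
      (n : ℝ) ^ (-((n : ℝ) * (∑ i, (1 : ℝ) / (p i : ℝ)) + ∑ i, (p i : ℝ))) ≤
      Nat.card {x : Fin m → Equiv.Perm (Fin n) // (∀ i, x i ^ p i = 1) ∧ TransTuple x} := by
  classical
  have : ∀ i, NeZero (p i) := fun i => ⟨by have := hp i; omega⟩
  have hlim := tendsto_choose_sum ((m:ℝ) - 1 - ∑ i, (1:ℝ) / p i) (by linarith)
  have hev := hlim.eventually (gt_mem_nhds (by positivity : (0:ℝ) < 1 / 2 / 2 ^ (∑ i, p i)))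
  filter_upwards [hev, eventually_ge_atTop 1] with n hn hn1
  have hb := bad_count m n p hp
  set E := (i : Fin m) → (MSet n (p i) ≃ Fin n)
  set D := {x : Fin m → Equiv.Perm (Fin n) // (∀ i, x i ^ p i = 1) ∧ TransTuple x} with hD
  have hE : Nat.card E = n.factorial ^ m := by
    rw [Nat.card_pi]
    have : ∀ i, Nat.card (MSet n (p i) ≃ Fin n) = n.factorial := fun i => by
      rw [Nat.card_eq_fintype_card, Fintype.card_equiv (Fintype.equivFinOfCardEq (card_Mod n (p i))), card_Mod]
    rw [Finset.prod_congr rfl fun i _ => this i]; simp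
  have hsplit : Nat.card {e : E // TransTuple (fun i => mperm n (p i) (e i))} +
      Nat.card {e : E // ¬ TransTuple (fun i => mperm n (p i) (e i))} = Nat.card E := by
    rw [← Nat.card_sum]
    exact Nat.card_congr (Equiv.sumCompl _)
  have hgood : (n.factorial : ℝ) ^ m / 2 ≤ Nat.card {e : E // TransTuple (fun i => mperm n (p i) (e i))} := by
    have h1 : (Nat.card {e : E // TransTuple (fun i => mperm n (p i) (e i))} : ℝ) +
      Nat.card {e : E // ¬ TransTuple (fun i => mperm n (p i) (e i))} = (n.factorial : ℝ) ^ m := by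
      rw [hE] at hsplit; exact_mod_cast hsplit
    have h2 : (n.factorial : ℝ) ^ m * 2 ^ (∑ i, p i) *
        ∑ s ∈ Finset.Ioo 0 n, ((n.choose s : ℕ) : ℝ) ^ (-((m:ℝ) - 1 - ∑ i, (1:ℝ) / p i)) ≤
        (n.factorial : ℝ) ^ m * 2 ^ (∑ i, p i) * (1 / 2 / 2 ^ (∑ i, p i)) :=
      mul_le_mul_of_nonneg_left hn.le (by positivity)
    have h3 : (n.factorial : ℝ) ^ m * 2 ^ (∑ i, p i) * (1 / 2 / 2 ^ (∑ i, p i)) = (n.factorial : ℝ) ^ m / 2 := by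
      field_simp
    linarith
  -- fibres
  have hfib : Nat.card {e : E // TransTuple (fun i => mperm n (p i) (e i))} ≤
      Nat.card D * ∏ i, n ^ (n / p i + n % p i) := by
    have hc : ∏ i, Nat.card {y : Equiv.Perm (MSet n (p i)) //
        ∀ a, y (rot (n / p i) (p i) (n % p i) a) = rot (n / p i) (p i) (n % p i) (y a)} ≤
        ∏ i, n ^ (n / p i + n % p i) :=
      Finset.prod_le_prod' fun i _ => card_comm _ _ _ n (hp i) (Nat.div_add_mod' n (p i))
    refine le_trans ?_ (Nat.mul_le_mul_left _ hc)
    let f : {e : E // TransTuple (fun i => mperm n (p i) (e i))} → D := fun e =>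
      ⟨fun i => mperm n (p i) (e.1 i), fun i => by
        have : mperm n (p i) (e.1 i) ^ p i = (e.1 i).permCongr (rot (n / p i) (p i) (n % p i) ^ p i) :=
          (map_pow ((e.1 i).permCongrHom) _ _).symm
        rw [this, rot_pow]
        exact map_one ((e.1 i).permCongrHom), e.2⟩
    rw [← Nat.card_pi, ← Nat.card_prod]
    have hne : ∀ d : Set.range f, ∃ e, f e = d := fun d => d.2
    let sec : D → E := fun d => if hd : ∃ e, f e = d then hd.choose.1 else fun i =>
      Fintype.equivFinOfCardEq (card_Mod n (p i))
    have hsec : ∀ e i, mperm n (p i) (sec (f e) i) = mperm n (p i) (e.1 i) := by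
      intro e i
      have hd : ∃ e', f e' = f e := ⟨e, rfl⟩
      have h1 : sec (f e) = hd.choose.1 := dif_pos hd
      rw [h1]
      exact congrFun (congrArg Subtype.val hd.choose_spec) i
    refine Nat.card_le_card_of_injective (fun e => (f e, fun i =>
      ⟨(e.1 i).trans (sec (f e) i).symm, ?_⟩)) ?_
    · intro a
      have h1 := Equiv.congr_fun (hsec e i) (e.1 i a)
      simp only [mperm, Equiv.permCongr_apply, Equiv.symm_apply_apply] at h1
      simp only [Equiv.trans_apply]
      rw [← h1]; simp
    · intro e e' hh
      simp only [Prod.mk.injEq] at hh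
      apply Subtype.ext
      funext i
      have h2 := congrArg Subtype.val (congrFun hh.2 i)
      simp only [hh.1] at h2
      ext a
      have h3 := Equiv.congr_fun h2 a
      simp only [Equiv.trans_apply, EmbeddingLike.apply_eq_iff_eq] at h3
      rw [h3]
  have hn0 : (0:ℝ) < n := by exact_mod_cast hn1
  have hprod : ((∏ i, n ^ (n / p i + n % p i) : ℕ) : ℝ) ≤
      (n : ℝ) ^ ((n : ℝ) * (∑ i, (1 : ℝ) / (p i : ℝ)) + ∑ i, (p i : ℝ)) := by
    push_cast
    rw [Finset.mul_sum, ← Finset.sum_add_distrib, Real.rpow_sum_of_pos hn0]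
    refine Finset.prod_le_prod (fun i _ => by positivity) fun i _ => ?_
    rw [← Real.rpow_natCast]
    refine Real.rpow_le_rpow_of_exponent_le (by exact_mod_cast hn1) ?_
    push_cast
    have h1 : ((n / p i : ℕ) : ℝ) ≤ n * (1 / p i) := by
      rw [mul_one_div]; exact Nat.cast_div_le
    have h2 : ((n % p i : ℕ) : ℝ) ≤ p i := by
      exact_mod_cast (Nat.mod_lt n (by have := hp i; omega)).le
    linarith
  rw [Real.rpow_neg hn0.le, ← div_eq_mul_inv, div_le_iff₀ (Real.rpow_pos_of_pos hn0 _)]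
  refine hgood.trans ?_
  have h1 : (Nat.card {e : E // TransTuple (fun i => mperm n (p i) (e i))} : ℝ) ≤
      Nat.card D * ((∏ i, n ^ (n / p i + n % p i) : ℕ) : ℝ) := by exact_mod_cast hfib
  exact h1.trans (mul_le_mul_of_nonneg_left hprod (by positivity))


/-- homomorphisms to `ℚ` as a submodule of functions -/
def HomQ (H : Type*) [Group H] : Submodule ℚ (H → ℚ) where
  carrier := {χ | ∀ a b, χ (a * b) = χ a + χ b}
  add_mem' := by
    intro χ χ' h h' a b
    simp only [Pi.add_apply, h a b, h' a b]; ring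
  zero_mem' := by intro a b; simp
  smul_mem' := by
    intro c χ h a b
    simp only [Pi.smul_apply, h a b, smul_eq_mul]; ring

lemma betti1_eq {G : Type*} [Group G] (H : Subgroup G) : betti1 H = Module.finrank ℚ (HomQ H) := by
  unfold betti1
  rw [← Subspace.dual_finrank_eq]
  let e1 : (Additive (Abelianization H) →ₗ[ℤ] ℚ) ≃ₗ[ℚ] Module.Dual ℚ (ℚ ⊗[ℤ] (Additive (Abelianization H))) :=
    LinearMap.liftBaseChangeEquiv ℚ
  rw [← LinearEquiv.finrank_eq e1]
  let f : (Additive (Abelianization H) →ₗ[ℤ] ℚ) →ₗ[ℚ] HomQ H :=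
    { toFun := fun φ => ⟨fun h => φ (Additive.ofMul (Abelianization.of h)), fun a b => by
        beta_reduce; rw [map_mul, ofMul_mul, map_add]⟩
      map_add' := fun φ ψ => by ext; rfl
      map_smul' := fun c φ => by ext; rfl }
  refine LinearEquiv.finrank_eq (LinearEquiv.ofBijective f ⟨?_, ?_⟩)
  · intro φ ψ h
    ext a
    obtain ⟨a, rfl⟩ := Additive.ofMul.surjective a
    obtain ⟨h', rfl⟩ := QuotientGroup.mk_surjective a
    exact congrFun (congrArg Subtype.val h) h'
  · rintro ⟨χ, hχ⟩
    let χ' : H →* Multiplicative ℚ :=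
      { toFun := fun h => Multiplicative.ofAdd (χ h)
        map_one' := by
          have := hχ 1 1
          simp at this
          rw [this]; rfl
        map_mul' := fun a b => by rw [hχ]; rfl }
    refine ⟨AddMonoidHom.toIntLinearMap (MonoidHom.toAdditiveLeft (Abelianization.lift χ')), ?_⟩
    apply Subtype.ext
    funext h
    rfl

/-- 1-cocycles of `G` with values in functions on `X` -/
def Zco (G X : Type*) [Group G] [MulAction G X] : Submodule ℚ (G → X → ℚ) where
  carrier := {ψ | ∀ g h x, ψ (g * h) x = ψ g (h • x) + ψ h x}
  add_mem' := by
    intro χ χ' h h' a b x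
    simp only [Pi.add_apply, h a b x, h' a b x]; ring
  zero_mem' := by intro a b; simp
  smul_mem' := by
    intro c χ h a b x
    simp only [Pi.smul_apply, h a b, smul_eq_mul]; ring

/-- coboundary map -/
def dco (G X : Type*) [Group G] [MulAction G X] : (X → ℚ) →ₗ[ℚ] Zco G X where
  toFun f := ⟨fun g x => f (g • x) - f x, fun g h x => by beta_reduce; rw [mul_smul]; ring⟩
  map_add' f f' := by
    apply Subtype.ext; funext g x; simp; ring
  map_smul' c f := by
    apply Subtype.ext; funext g x; simp; ring

lemma finrank_const {X : Type*} [Nonempty X] (K : Submodule ℚ (X → ℚ)) (hK : ∀ f ∈ K, ∀ x y, f x = f y) :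
    Module.finrank ℚ K ≤ 1 := by
  let x0 : X := Classical.arbitrary X
  let f : K →ₗ[ℚ] ℚ := (LinearMap.proj x0).comp K.subtype
  have := LinearMap.finrank_le_finrank_of_injective (f := f) (by
    intro a b h
    apply Subtype.ext; funext y
    rw [hK a.1 a.2 y x0, hK b.1 b.2 y x0]; exact h)
  simpa using this

lemma finrank_dco (G X : Type*) [Group G] [MulAction G X] [Finite X] [Nonempty X]
    [MulAction.IsPretransitive G X] :
    Module.finrank ℚ (LinearMap.range (dco G X)) + 1 = Nat.card X := by
  have := Fintype.ofFinite X
  have h1 := LinearMap.finrank_range_add_finrank_ker (dco G X)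
  rw [Module.finrank_fintype_fun_eq_card, ← Nat.card_eq_fintype_card] at h1
  have hk : ∀ f, f ∈ LinearMap.ker (dco G X) ↔ ∀ (g : G) x, f (g • x) = f x := by
    intro f
    rw [LinearMap.mem_ker]
    constructor
    · intro h g x
      have := congrFun (congrFun (congrArg Subtype.val h) g) x
      exact sub_eq_zero.1 this
    · intro h
      apply Subtype.ext; funext g x
      exact sub_eq_zero.2 (h g x)
  have h2 : Module.finrank ℚ (LinearMap.ker (dco G X)) ≤ 1 := by
    apply finrank_const
    intro f hf x y
    obtain ⟨g, rfl⟩ := MulAction.exists_smul_eq G x y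
    exact ((hk f).1 hf g x).symm
  have h3 : 0 < Module.finrank ℚ (LinearMap.ker (dco G X)) := by
    rw [Module.finrank_pos_iff_exists_ne_zero]
    refine ⟨⟨fun _ => 1, (hk _).2 fun _ _ => rfl⟩, ?_⟩
    intro h
    have := congrFun (congrArg Subtype.val h) (Classical.arbitrary X)
    simp at this
  omega

lemma finrank_Zco {G : Type*} [Group G] (H : Subgroup G) [Finite (G ⧸ H)]
    [FiniteDimensional ℚ (Zco G (G ⧸ H))] :
    Module.finrank ℚ (Zco G (G ⧸ H)) + 1 = Module.finrank ℚ (HomQ H) + Nat.card (G ⧸ H) := by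
  let x0 : G ⧸ H := QuotientGroup.mk 1
  have hx0 : ∀ h : H, (h : G) • x0 = x0 := by
    intro h
    change QuotientGroup.mk ((h : G) * 1) = QuotientGroup.mk 1
    rw [QuotientGroup.eq]; simp
  let s : G ⧸ H → G := Quotient.out
  have hs : ∀ x, s x • x0 = x := by
    intro x
    change QuotientGroup.mk (s x * 1) = x
    rw [mul_one]; exact Quotient.out_eq x
  have hmem : ∀ g : G, g • x0 = x0 → g ∈ H := by
    intro g hg
    change QuotientGroup.mk (g * 1) = QuotientGroup.mk 1 at hg
    rw [eq_comm, QuotientGroup.eq] at hg; simpa using hg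
  have hd : ∀ g x, (s (g • x))⁻¹ * g * s x ∈ H := by
    intro g x
    apply hmem
    rw [mul_smul, mul_smul, hs, inv_smul_eq_iff, hs]
  let R : Zco G (G ⧸ H) →ₗ[ℚ] HomQ H :=
    { toFun := fun ψ => ⟨fun h => ψ.1 h x0, fun a b => by
        have := ψ.2 (a : G) (b : G) x0
        rw [hx0] at this
        exact this⟩
      map_add' := fun _ _ => rfl
      map_smul' := fun _ _ => rfl }
  have hR : Function.Surjective R := by
    rintro ⟨χ, hχ⟩
    have hχ' : ∀ a b, χ (a * b) = χ a + χ b := hχ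
    refine ⟨⟨fun g x => χ ⟨_, hd g x⟩, ?_⟩, ?_⟩
    · intro g h x
      beta_reduce
      rw [← hχ']
      refine congrArg χ ?_
      apply Subtype.ext
      simp only [Subgroup.coe_mul, mul_smul]
      group
    · apply Subtype.ext
      funext h
      change χ ⟨_, hd (h : G) x0⟩ = χ h
      have hs0 : s x0 ∈ H := hmem _ (hs x0)
      have e1 : (⟨_, hd (h : G) x0⟩ : H) = (⟨s x0, hs0⟩ : H)⁻¹ * h * ⟨s x0, hs0⟩ := by
        apply Subtype.ext
        simp [hx0]
      have e2 : χ ((⟨s x0, hs0⟩ : H)⁻¹) + χ ⟨s x0, hs0⟩ = 0 := by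
        rw [← hχ', inv_mul_cancel]
        have := hχ' 1 1
        simpa using this
      rw [e1, hχ', hχ']
      linarith
  have hker : LinearMap.ker R = LinearMap.range (dco G (G ⧸ H)) := by
    ext ψ
    rw [LinearMap.mem_ker, LinearMap.mem_range]
    constructor
    · intro h
      have h0 : ∀ k : H, ψ.1 k x0 = 0 := fun k => congrFun (congrArg Subtype.val h) k
      refine ⟨fun x => ψ.1 (s x) x0, ?_⟩
      apply Subtype.ext
      funext g x
      change ψ.1 (s (g • x)) x0 - ψ.1 (s x) x0 = ψ.1 g x
      have a1 := ψ.2 g (s x) x0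
      have a2 := ψ.2 (s (g • x)) ((s (g • x))⁻¹ * g * s x) x0
      have a3 := h0 ⟨_, hd g x⟩
      have a4 := hx0 ⟨_, hd g x⟩
      simp only at a3 a4
      rw [a3, a4] at a2
      rw [hs] at a1
      have a5 : s (g • x) * ((s (g • x))⁻¹ * g * s x) = g * s x := by group
      rw [a5, a1] at a2
      linarith
    · rintro ⟨f, rfl⟩
      apply Subtype.ext
      funext h
      change f ((h : G) • x0) - f x0 = 0
      rw [hx0]; ring
  have h1 := LinearMap.finrank_range_add_finrank_ker R
  rw [LinearMap.range_eq_top.2 hR, finrank_top, hker] at h1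
  have h2 := finrank_dco G (G ⧸ H)
  omega


/-- the norm operator of a permutation -/
def Nop {X : Type*} (k : ℕ) (x : Equiv.Perm X) : (X → ℚ) →ₗ[ℚ] (X → ℚ) where
  toFun v := fun a => ∑ j ∈ Finset.range k, v ((x ^ j) a)
  map_add' v w := by funext a; simp [Finset.sum_add_distrib]
  map_smul' c v := by funext a; simp [Finset.mul_sum]

lemma Nop_apply {X : Type*} (k : ℕ) (x : Equiv.Perm X) (v : X → ℚ) (a : X) :
    Nop k x v a = ∑ j ∈ Finset.range k, v ((x ^ j) a) := rfl

/-- tuples of functions with the same norms -/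
def Wsp {X : Type*} (m : ℕ) (p : Fin m → ℕ) (x : Fin m → Equiv.Perm X) :
    Submodule ℚ (Fin m → X → ℚ) where
  carrier := {v | ∀ i j, Nop (p i) (x i) (v i) = Nop (p j) (x j) (v j)}
  add_mem' := by
    intro v w hv hw i j
    simp only [Pi.add_apply, map_add, hv i j, hw i j]
  zero_mem' := by intro i j; simp
  smul_mem' := by
    intro c v hv i j
    simp only [Pi.smul_apply, map_smul, hv i j]

lemma Nop_inv {X : Type*} (k : ℕ) (x : Equiv.Perm X) (hx : x ^ k = 1) (v : X → ℚ) (a : X) :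
    Nop k x v (x a) = Nop k x v a := by
  rw [Nop_apply, Nop_apply]
  have h1 : ∀ j, (x ^ j) (x a) = (x ^ (j + 1)) a := by
    intro j; rw [pow_succ]; rfl
  simp only [h1]
  have h2 := Finset.sum_range_succ (fun j => v ((x ^ j) a)) k
  have h3 := Finset.sum_range_succ' (fun j => v ((x ^ j) a)) k
  rw [h2, hx] at h3
  simp at h3
  linarith

lemma finrank_range_Nop {X : Type*} [Finite X] (k : ℕ) (hk : 0 < k) (x : Equiv.Perm X) (hx : x ^ k = 1) :
    Module.finrank ℚ (LinearMap.range (Nop k x)) = cyc x := by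
  have hq : Finite (Quotient (Equiv.Perm.SameCycle.setoid x)) := inferInstance
  have := Fintype.ofFinite (Quotient (Equiv.Perm.SameCycle.setoid x))
  have hmem : ∀ f, f ∈ LinearMap.range (Nop k x) ↔ ∀ a, f (x a) = f a := by
    intro f
    constructor
    · rintro ⟨v, rfl⟩ a
      exact Nop_inv k x hx v a
    · intro hf
      refine ⟨(k : ℚ)⁻¹ • f, ?_⟩
      funext a
      rw [Nop_apply]
      have : ∀ j, f ((x ^ j) a) = f a := by
        intro j
        exact (inv_of_sameCycle x f hf ⟨j, by simp⟩).symm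
      simp only [Pi.smul_apply, this, Finset.sum_const, Finset.card_range, smul_eq_mul, nsmul_eq_mul]
      have : (k:ℚ) ≠ 0 := by exact_mod_cast hk.ne'
      field_simp
  let e : LinearMap.range (Nop k x) ≃ₗ[ℚ] (Quotient (Equiv.Perm.SameCycle.setoid x) → ℚ) :=
    LinearEquiv.symm
    { toFun := fun g => ⟨((invEquiv ℚ x).symm g).1, (hmem _).2 ((invEquiv ℚ x).symm g).2⟩
      invFun := fun f => invEquiv ℚ x ⟨f.1, (hmem _).1 f.2⟩
      map_add' := fun _ _ => rfl
      map_smul' := fun _ _ => rfl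
      left_inv := fun g => by simp
      right_inv := fun f => by
        apply Subtype.ext
        simp }
  rw [e.finrank_eq, Module.finrank_fintype_fun_eq_card, cyc, Nat.card_eq_fintype_card]

lemma finrank_Wsp {X : Type*} [Finite X] [Nonempty X] (m : ℕ) (hm : 0 < m) (p : Fin m → ℕ) (hp : ∀ i, 0 < p i)
    (x : Fin m → Equiv.Perm X) (hx : ∀ i, x i ^ p i = 1)
    (ht : ∀ f : X → ℚ, (∀ i a, f (x i a) = f a) → ∀ a b, f a = f b) :
    m * Nat.card X ≤ Module.finrank ℚ (Wsp m p x) + ∑ i, cyc (x i) ∧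
    Module.finrank ℚ (Wsp m p x) + ∑ i, cyc (x i) ≤ m * Nat.card X + 1 := by
  have := Fintype.ofFinite X
  let i0 : Fin m := ⟨0, hm⟩
  let θ : Wsp m p x →ₗ[ℚ] (X → ℚ) :=
    (Nop (p i0) (x i0)).comp ((LinearMap.proj i0).comp (Wsp m p x).subtype)
  have hθ : ∀ (v : Wsp m p x) i, θ v = Nop (p i) (x i) (v.1 i) := fun v i => v.2 i0 i
  have h1 := LinearMap.finrank_range_add_finrank_ker θ
  have h2 : Module.finrank ℚ (LinearMap.range θ) ≤ 1 := by
    apply finrank_const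
    rintro f ⟨v, rfl⟩
    apply ht
    intro i a
    rw [hθ v i]
    exact Nop_inv _ _ (hx i) _ _
  let e : LinearMap.ker θ ≃ₗ[ℚ] ((i : Fin m) → LinearMap.ker (Nop (p i) (x i))) :=
    { toFun := fun v i => ⟨v.1.1 i, by rw [LinearMap.mem_ker, ← hθ]; exact v.2⟩
      invFun := fun w => ⟨⟨fun i => (w i).1, fun i j => by
        have a := (w i).2
        have b := (w j).2
        rw [LinearMap.mem_ker] at a b
        rw [a, b]⟩, by
          rw [LinearMap.mem_ker, hθ _ i0]; exact (w i0).2⟩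
      map_add' := fun _ _ => rfl
      map_smul' := fun _ _ => rfl
      left_inv := fun _ => rfl
      right_inv := fun _ => rfl }
  have h3 : Module.finrank ℚ (LinearMap.ker θ) + ∑ i, cyc (x i) = m * Nat.card X := by
    rw [e.finrank_eq, Module.finrank_pi_fintype, ← Finset.sum_add_distrib]
    have : ∀ i, Module.finrank ℚ (LinearMap.ker (Nop (p i) (x i))) + cyc (x i) = Nat.card X := by
      intro i
      rw [← finrank_range_Nop (p i) (hp i) (x i) (hx i), add_comm, LinearMap.finrank_range_add_finrank_ker,
        Module.finrank_fintype_fun_eq_card, Nat.card_eq_fintype_card]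
    rw [Finset.sum_congr rfl fun i _ => this i]
    simp
  omega

/-- the skew permutation of `X × ℚ` -/
def skew {X : Type*} (x : Equiv.Perm X) (v : X → ℚ) : Equiv.Perm (X × ℚ) where
  toFun a := (x a.1, a.2 + v a.1)
  invFun a := (x.symm a.1, a.2 - v (x.symm a.1))
  left_inv a := by simp
  right_inv a := by simp

lemma skew_pow {X : Type*} (x : Equiv.Perm X) (v : X → ℚ) (k : ℕ) (a : X × ℚ) :
    (skew x v ^ k) a = ((x ^ k) a.1, a.2 + Nop k x v a.1) := by
  induction k with
  | zero => simp [Nop_apply]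
  | succ k ih =>
    rw [pow_succ', Equiv.Perm.mul_apply, ih, pow_succ', Nop_apply, Nop_apply, Finset.sum_range_succ]
    simp only [skew, Equiv.coe_fn_mk, Equiv.Perm.mul_apply, add_assoc]

section
variable (m : ℕ) (p : Fin m → ℕ)

lemma torus_rel (i j : Fin m) :
    (PresentedGroup.of i : TorusKnotGroup m p) ^ p i = PresentedGroup.of j ^ p j := by
  have : (PresentedGroup.mk (torusRels m p)) (FreeGroup.of i ^ p i * (FreeGroup.of j ^ p j)⁻¹) = 1 :=
    PresentedGroup.one_of_mem ⟨i, j, rfl⟩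
  rw [map_mul, map_inv, mul_inv_eq_one, map_pow, map_pow] at this
  exact this

lemma toPermHom_of_pow {X : Type*} {G : Type*} [Group G] [MulAction G X] (g : G) (k : ℕ) :
    MulAction.toPerm g ^ k = (MulAction.toPerm (g ^ k) : Equiv.Perm X) :=
  (map_pow (MulAction.toPermHom G X) g k).symm

lemma Zco_equiv (X : Type*) [MulAction (TorusKnotGroup m p) X] :
    Nonempty (Zco (TorusKnotGroup m p) X ≃ₗ[ℚ]
      Wsp m p (fun i => (MulAction.toPerm (PresentedGroup.of i : TorusKnotGroup m p) : Equiv.Perm X))) := by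
  set G := TorusKnotGroup m p with hG
  let y : Fin m → G := fun i => PresentedGroup.of i
  have hcl : Subgroup.closure (Set.range y) = ⊤ := PresentedGroup.closure_range_of (torusRels m p)
  have h1 : ∀ (ψ : Zco G X) x, ψ.1 1 x = 0 := by
    intro ψ x
    have := ψ.2 1 1 x
    simpa using this
  have hpow : ∀ (ψ : Zco G X) (g : G) (k : ℕ) x, ψ.1 (g ^ k) x =
      Nop k (MulAction.toPerm g : Equiv.Perm X) (ψ.1 g) x := by
    intro ψ g k
    induction k with
    | zero => intro x; simp [Nop_apply, h1]
    | succ k ih =>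
      intro x
      rw [pow_succ', ψ.2, ih, Nop_apply, Nop_apply, Finset.sum_range_succ, toPermHom_of_pow, add_comm]
      rfl
  let ρ : Zco G X →ₗ[ℚ] Wsp m p (fun i => (MulAction.toPerm (y i) : Equiv.Perm X)) :=
    { toFun := fun ψ => ⟨fun i => ψ.1 (y i), fun i j => by
        funext x
        beta_reduce
        rw [← hpow, ← hpow]
        exact congrFun (congrArg ψ.1 (torus_rel m p i j)) x⟩
      map_add' := fun _ _ => rfl
      map_smul' := fun _ _ => rfl }
  refine ⟨LinearEquiv.ofBijective ρ ⟨?_, ?_⟩⟩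
  · rw [← LinearMap.ker_eq_bot, LinearMap.ker_eq_bot']
    intro ψ hψ
    have hgen : ∀ i x, ψ.1 (y i) x = 0 := fun i x =>
      congrFun (congrFun (congrArg Subtype.val hψ) i) x
    apply Subtype.ext
    funext g
    have : g ∈ Subgroup.closure (Set.range y) := by rw [hcl]; trivial
    induction this using Subgroup.closure_induction with
    | mem g hg => obtain ⟨i, rfl⟩ := hg; funext x; exact hgen i x
    | one => funext x; exact h1 ψ x
    | mul a b _ _ ha hb =>
      funext x
      rw [ψ.2, ha, hb]; simp
    | inv a _ ha =>
      funext x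
      have := ψ.2 a a⁻¹ x
      rw [mul_inv_cancel, h1, ha] at this
      simpa using this.symm
  · rintro ⟨v, hv⟩
    let F : Fin m → Equiv.Perm (X × ℚ) := fun i => skew (MulAction.toPerm (y i)) (v i)
    have hF : ∀ r ∈ torusRels m p, FreeGroup.lift F r = 1 := by
      rintro r ⟨i, j, rfl⟩
      rw [map_mul, map_inv, mul_inv_eq_one, map_pow, map_pow, FreeGroup.lift_apply_of, FreeGroup.lift_apply_of]
      ext1 a
      rw [skew_pow, skew_pow, toPermHom_of_pow, toPermHom_of_pow]
      have e1 : y i ^ p i = y j ^ p j := torus_rel m p i j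
      have e2 := hv i j
      rw [e1]
      simp only at e2
      rw [e2]
    let φ : G →* Equiv.Perm (X × ℚ) := PresentedGroup.toGroup hF
    have hφ : ∀ i, φ (y i) = F i := fun i => PresentedGroup.toGroup.of hF
    have key : ∀ (g : G), ∀ x t, φ g (x, t) = (g • x, t + (φ g (x, 0)).2) := by
      intro g
      have : g ∈ Subgroup.closure (Set.range y) := by rw [hcl]; trivial
      induction this using Subgroup.closure_induction with
      | mem g hg =>
        obtain ⟨i, rfl⟩ := hg
        intro x t
        rw [hφ]
        simp [F, skew]
      | one => intro x t; simp
      | mul a b _ _ ha hb =>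
        intro x t
        rw [map_mul, Equiv.Perm.mul_apply, Equiv.Perm.mul_apply, hb x t, ha, hb x 0, ha (b • x) (0 + _), mul_smul]
        simp only [Prod.mk.injEq, true_and]
        ring
      | inv a _ ha =>
        intro x t
        have e1 : ∀ t, φ a⁻¹ (x, t) = (a⁻¹ • x, t - (φ a (a⁻¹ • x, 0)).2) := by
          intro t
          rw [map_inv, Equiv.Perm.inv_eq_iff_eq, ha]
          simp
        rw [e1, e1]
        simp only [Prod.mk.injEq, true_and]
        ring
    refine ⟨⟨fun g x => (φ g (x, 0)).2, ?_⟩, ?_⟩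
    · intro g h x
      beta_reduce
      rw [map_mul, Equiv.Perm.mul_apply, key h x 0, key g (h • x) (0 + _)]
      simp only
      ring
    · apply Subtype.ext
      funext i x
      change (φ (y i) (x, 0)).2 = v i x
      rw [hφ]
      simp [F, skew]

lemma betti_formula (hm : 0 < m) (hp : ∀ i, 0 < p i) (H : Subgroup (TorusKnotGroup m p)) (n : ℕ) (hn : 1 ≤ n)
    (hH : H.index = n)
    (hz : ∀ i (q : TorusKnotGroup m p ⧸ H), (PresentedGroup.of i : TorusKnotGroup m p) ^ p i • q = q) :
    m * n + 1 ≤ betti1 H + n + ∑ i, cyc (MulAction.toPerm (PresentedGroup.of i : TorusKnotGroup m p) :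
      Equiv.Perm (TorusKnotGroup m p ⧸ H)) ∧
    betti1 H + n + ∑ i, cyc (MulAction.toPerm (PresentedGroup.of i : TorusKnotGroup m p) :
      Equiv.Perm (TorusKnotGroup m p ⧸ H)) ≤ m * n + 2 := by
  have hcard : Nat.card (TorusKnotGroup m p ⧸ H) = n := hH
  have hfin : Finite (TorusKnotGroup m p ⧸ H) := Nat.finite_of_card_ne_zero (by omega)
  obtain ⟨e⟩ := Zco_equiv m p (TorusKnotGroup m p ⧸ H)
  have hfd : FiniteDimensional ℚ (Zco (TorusKnotGroup m p) (TorusKnotGroup m p ⧸ H)) :=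
    FiniteDimensional.of_injective e.toLinearMap e.injective
  have h1 := finrank_Zco H
  rw [e.finrank_eq, hcard, ← betti1_eq] at h1
  have h2 := finrank_Wsp (X := TorusKnotGroup m p ⧸ H) m hm p hp
    (fun i => MulAction.toPerm (PresentedGroup.of i : TorusKnotGroup m p)) (by
      intro i
      rw [toPermHom_of_pow]
      ext q
      exact hz i q) (by
      intro f hf
      have key : ∀ (g : TorusKnotGroup m p) a, f (g • a) = f a := by
        intro g
        have : g ∈ Subgroup.closure (Set.range (PresentedGroup.of : Fin m → TorusKnotGroup m p)) := by
          rw [PresentedGroup.closure_range_of]; trivial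
        induction this using Subgroup.closure_induction with
        | mem g hg => obtain ⟨i, rfl⟩ := hg; exact fun a => hf i a
        | one => intro a; simp
        | mul a b _ _ ha hb => intro x; rw [mul_smul, ha, hb]
        | inv a _ ha => intro x; rw [← ha (a⁻¹ • x)]; simp
      intro a b
      obtain ⟨g, rfl⟩ := MulAction.exists_smul_eq (TorusKnotGroup m p) a b
      exact (key g a).symm)
  rw [hcard] at h2
  omega
end


lemma hom_card {K A : Type*} [Group K] [Group A] [Finite A] (S : Finset K)
    (hS : Subgroup.closure (S : Set K) = ⊤) :
    Finite (K →* A) ∧ Nat.card (K →* A) ≤ Nat.card A ^ S.card := by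
  have hinj : Function.Injective (fun (f : K →* A) (s : S) => f s) := by
    intro f g hfg
    apply MonoidHom.eq_of_eqOn_dense hS
    intro x hx
    exact congrFun hfg ⟨x, hx⟩
  refine ⟨Finite.of_injective _ hinj, ?_⟩
  have := Nat.card_le_card_of_injective _ hinj
  rwa [Nat.card_fun, Nat.card_eq_fintype_card (α := S), Fintype.card_coe] at this

lemma exists_char {K : Type*} [Group K] (H : Subgroup K) (z : K) (hz : ∀ g, g * z = z * g)
    (hH : H ⊔ Subgroup.zpowers z = ⊤) (k : ℕ) (hk : H.index = k) :
    ∃ f : K →* Multiplicative (ZMod k), f.ker = H := by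
  have hzn : (Subgroup.zpowers z).Normal := by
    constructor
    intro a ha g
    obtain ⟨j, rfl⟩ := ha
    have : Commute g (z ^ j) := (show Commute g z from hz g).zpow_right j
    rw [this.eq, mul_assoc, mul_inv_cancel, mul_one]
    exact ⟨j, rfl⟩
  have hdec : ∀ g : K, ∃ h ∈ H, ∃ j : ℤ, g = h * z ^ j := by
    intro g
    have : g ∈ H ⊔ Subgroup.zpowers z := by rw [hH]; trivial
    rw [Subgroup.mem_sup_of_normal_right] at this
    obtain ⟨y, hy, w, ⟨j, rfl⟩, rfl⟩ := this
    exact ⟨y, hy, j, rfl⟩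
  have hHn : H.Normal := by
    constructor
    intro a ha g
    obtain ⟨h, hh, j, rfl⟩ := hdec g
    have : Commute a (z ^ j) := (show Commute a z from hz a).zpow_right j
    have e : h * z ^ j * a * (h * z ^ j)⁻¹ = h * a * h⁻¹ := by
      rw [mul_assoc h, ← this.eq]; group
    rw [e]
    exact H.mul_mem (H.mul_mem hh ha) (H.inv_mem hh)
  have hcyc : IsCyclic (K ⧸ H) := by
    refine ⟨QuotientGroup.mk z, ?_⟩
    intro q
    obtain ⟨g, rfl⟩ := QuotientGroup.mk_surjective q
    obtain ⟨h, hh, j, rfl⟩ := hdec g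
    refine ⟨j, ?_⟩
    simp only [QuotientGroup.mk_mul, QuotientGroup.mk_zpow]
    rw [(QuotientGroup.eq_one_iff h).2 hh, one_mul]
  have hcard : Nat.card (K ⧸ H) = k := hk
  subst hcard
  refine ⟨(zmodCyclicMulEquiv hcyc).symm.toMonoidHom.comp (QuotientGroup.mk' H), ?_⟩
  ext x
  simp [MonoidHom.mem_ker]

lemma count_over {G : Type*} [Group G] (m : ℕ) (S : Finset G) (hS : Subgroup.closure (S : Set G) = ⊤)
    (hSm : S.card ≤ m) (z : G) (hz : ∀ g, g * z = z * g) (n : ℕ) (hn : 1 ≤ n) (K : Subgroup G) :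
    ({H : Subgroup G | H.index = n ∧ H ⊔ Subgroup.zpowers z = K}).ncard ≤ 2 ^ (m * n) := by
  by_cases hne : ∃ H : Subgroup G, H.index = n ∧ H ⊔ Subgroup.zpowers z = K
  swap
  · have : ({H : Subgroup G | H.index = n ∧ H ⊔ Subgroup.zpowers z = K}) = ∅ := by
      ext H; simp; intro h1 h2; exact hne ⟨H, h1, h2⟩
    rw [this]; simp
  obtain ⟨H₀, hi₀, hs₀⟩ := hne
  have hle₀ : H₀ ≤ K := hs₀ ▸ le_sup_left
  have hrel₀ := Subgroup.relIndex_mul_index hle₀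
  set k := H₀.relIndex K with hk
  have hN : K.index ≠ 0 := by rintro h; rw [h] at hrel₀; omega
  have hk0 : k ≠ 0 := by rintro h; rw [h] at hrel₀; omega
  have : NeZero k := ⟨hk0⟩
  have hfg : Group.FG G := ⟨⟨S, hS⟩⟩
  have : K.FiniteIndex := ⟨hN⟩
  have hrG : Group.rank G ≤ m := (Group.rank_le hS).trans hSm
  have hrK : Group.rank K ≤ K.index * m :=
    (Subgroup.rank_le_index_mul_rank (H := K)).trans (Nat.mul_le_mul_left _ hrG)
  obtain ⟨T, hTc, hT⟩ := Group.rank_spec K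
  obtain ⟨hfin, hcard⟩ := hom_card (A := Multiplicative (ZMod k)) T hT
  have hzK : z ∈ K := hs₀ ▸ (le_sup_right : _ ≤ H₀ ⊔ _) (Subgroup.mem_zpowers z)
  have hex : ∀ H : {H : Subgroup G | H.index = n ∧ H ⊔ Subgroup.zpowers z = K},
      ∃ f : K →* Multiplicative (ZMod k), f.ker = H.1.subgroupOf K := by
    rintro ⟨H, hi, hs⟩
    have hle : H ≤ K := hs ▸ le_sup_left
    apply exists_char _ (⟨z, hzK⟩ : K)
    · rintro ⟨g, hg⟩
      exact Subtype.ext (hz g)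
    · apply Subgroup.map_injective K.subtype_injective
      rw [Subgroup.map_sup, MonoidHom.map_zpowers, Subgroup.map_subgroupOf_eq_of_le hle, ← MonoidHom.range_eq_map, Subgroup.range_subtype]
      exact hs
    · have h1 := Subgroup.relIndex_mul_index hle
      have : H.relIndex K * K.index = k * K.index := by rw [h1, hrel₀, hi, hi₀]
      exact Nat.eq_of_mul_eq_mul_right (Nat.pos_of_ne_zero hN) this
  choose f hf using hex
  have hinj : Function.Injective f := by
    intro H H' e
    have h1 : H.1.subgroupOf K = H'.1.subgroupOf K := by rw [← hf, ← hf, e]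
    have l1 : H.1 ≤ K := le_sup_left.trans H.2.2.le
    have l2 : H'.1 ≤ K := le_sup_left.trans H'.2.2.le
    apply Subtype.ext
    rw [← Subgroup.map_subgroupOf_eq_of_le l1, h1, Subgroup.map_subgroupOf_eq_of_le l2]
  calc _ ≤ Nat.card (K →* Multiplicative (ZMod k)) := Nat.card_le_card_of_injective f hinj
    _ ≤ Nat.card (Multiplicative (ZMod k)) ^ T.card := hcard
    _ = k ^ T.card := by simp
    _ ≤ k ^ (K.index * m) := Nat.pow_le_pow_right (Nat.pos_of_ne_zero hk0) (hTc ▸ hrK)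
    _ ≤ (2 ^ k) ^ (K.index * m) := Nat.pow_le_pow_left (Nat.lt_two_pow_self).le _
    _ = 2 ^ (m * n) := by rw [← pow_mul, ← mul_assoc, hrel₀, hi₀, mul_comm]

lemma count_bad2 {G : Type*} [Group G] (m : ℕ) (S : Finset G) (hS : Subgroup.closure (S : Set G) = ⊤)
    (hSm : S.card ≤ m) (z : G) (hz : ∀ g, g * z = z * g) (n : ℕ) (hn : 1 ≤ n)
    (hfin : ∀ n, 1 ≤ n → {H : Subgroup G | H.index = n}.Finite) :
    ({H : Subgroup G | H.index = n ∧ z ∉ H}).ncard ≤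
      2 ^ (m * n) * ∑ N ∈ Finset.Icc 1 (n / 2), ({K : Subgroup G | K.index = N ∧ z ∈ K}).ncard := by
  classical
  have hf1 : ({H : Subgroup G | H.index = n ∧ z ∉ H}).Finite :=
    (hfin n hn).subset (fun H hH => hH.1)
  have hf2 : ∀ N, 1 ≤ N → ({K : Subgroup G | K.index = N ∧ z ∈ K}).Finite := fun N hN =>
    (hfin N hN).subset (fun H hH => hH.1)
  have hsub : hf1.toFinset.image (fun H => H ⊔ Subgroup.zpowers z) ⊆
      (Finset.Icc 1 (n / 2)).biUnion (fun N => if hN : 1 ≤ N then (hf2 N hN).toFinset else ∅) := by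
    intro K hK
    rw [Finset.mem_image] at hK
    obtain ⟨H, hH, rfl⟩ := hK
    rw [Set.Finite.mem_toFinset] at hH
    obtain ⟨hi, hzH⟩ := hH
    set K := H ⊔ Subgroup.zpowers z with hK
    have hzK : z ∈ K := (le_sup_right : _ ≤ H ⊔ _) (Subgroup.mem_zpowers z)
    have hle : H ≤ K := le_sup_left
    have hrel := Subgroup.relIndex_mul_index hle
    rw [hi] at hrel
    have h0 : H.relIndex K ≠ 0 := by intro h; rw [h] at hrel; omega
    have h1 : H.relIndex K ≠ 1 := by
      intro h
      rw [Subgroup.relIndex_eq_one] at h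
      exact hzH (h hzK)
    have hN0 : 1 ≤ K.index := by
      rcases Nat.eq_zero_or_pos K.index with h | h
      · rw [h] at hrel; omega
      · exact h
    rw [Finset.mem_biUnion]
    refine ⟨K.index, ?_, ?_⟩
    · rw [Finset.mem_Icc]
      refine ⟨hN0, ?_⟩
      rw [Nat.le_div_iff_mul_le (by norm_num)]
      have : 2 ≤ H.relIndex K := by omega
      nlinarith
    · rw [dif_pos hN0, Set.Finite.mem_toFinset]
      exact ⟨rfl, hzK⟩
  rw [Set.ncard_eq_toFinset_card _ hf1]
  calc _ ≤ 2 ^ (m * n) * (hf1.toFinset.image (fun H => H ⊔ Subgroup.zpowers z)).card := by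
        apply Finset.card_le_mul_card_image
        intro K _
        refine le_trans ?_ (count_over m S hS hSm z hz n hn K)
        rw [← Set.ncard_coe_finset]
        apply Set.ncard_le_ncard
        · intro H hH
          simp at hH
          exact ⟨hH.1.1, hH.2⟩
        · exact (hfin n hn).subset (fun H hH => hH.1)
    _ ≤ _ := by
        apply Nat.mul_le_mul_left
        refine (Finset.card_le_card hsub).trans (Finset.card_biUnion_le.trans ?_)
        apply Finset.sum_le_sum
        intro N hN
        rw [Finset.mem_Icc] at hN
        rw [dif_pos hN.1, Set.ncard_eq_toFinset_card _ (hf2 N hN.1)]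


section
variable (m : ℕ) (p : Fin m → ℕ)

lemma torus_closure : Subgroup.closure
    (Set.range (PresentedGroup.of : Fin m → TorusKnotGroup m p)) = ⊤ :=
  PresentedGroup.closure_range_of _

lemma torus_gens : ∃ S : Finset (TorusKnotGroup m p),
    Subgroup.closure (S : Set (TorusKnotGroup m p)) = ⊤ ∧ S.card ≤ m := by
  classical
  refine ⟨Finset.univ.image (PresentedGroup.of : Fin m → TorusKnotGroup m p), ?_, ?_⟩
  · rw [Finset.coe_image, Finset.coe_univ, Set.image_univ]
    exact torus_closure m p
  · exact Finset.card_image_le.trans (by simp)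

lemma torus_central (i : Fin m) (g : TorusKnotGroup m p) :
    g * PresentedGroup.of i ^ p i = PresentedGroup.of i ^ p i * g := by
  have : g ∈ Subgroup.closure
    (Set.range (PresentedGroup.of : Fin m → TorusKnotGroup m p)) := by
    rw [torus_closure]; trivial
  induction this using Subgroup.closure_induction with
  | mem x hx =>
    obtain ⟨j, rfl⟩ := hx
    rw [torus_rel m p i j]
    exact (Commute.self_pow _ _).eq
  | one => simp
  | mul a b _ _ ha hb => exact (Commute.mul_left (show Commute a _ from ha) hb).eq
  | inv a _ ha => exact (Commute.inv_left (show Commute a _ from ha)).eq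

lemma torus_hom_finite (A : Type*) [Group A] [Finite A] : Finite (TorusKnotGroup m p →* A) := by
  obtain ⟨S, hS, -⟩ := torus_gens m p
  exact (hom_card S hS).1

lemma torus_fin (n : ℕ) (hn : 1 ≤ n) : {H : Subgroup (TorusKnotGroup m p) | H.index = n}.Finite := by
  have := torus_hom_finite m p (Equiv.Perm (Fin n))
  exact (subgroups_upper hn _ (fun H hH => hH) Set.univ Set.finite_univ (fun _ _ _ => trivial)).1

lemma torus_hom_count (n : ℕ) (T : Set (TorusKnotGroup m p →* Equiv.Perm (Fin n)))
    (A : Fin m → Set (Equiv.Perm (Fin n)))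
    (hT : ∀ φ ∈ T, ∀ i, φ (PresentedGroup.of i) ∈ A i) :
    Nat.card T ≤ ∏ i, Nat.card (A i) := by
  have hinj : Function.Injective (fun (φ : T) (i : Fin m) =>
      (⟨φ.1 (PresentedGroup.of i), hT φ.1 φ.2 i⟩ : A i)) := by
    intro φ ψ e
    apply Subtype.ext
    apply PresentedGroup.ext
    intro i
    exact congrArg Subtype.val (congrFun e i)
  have := Nat.card_le_card_of_injective _ hinj
  rwa [Nat.card_pi] at this

lemma smul_triv_of_mem {G : Type*} [Group G] (H : Subgroup G) (z : G) (hz : ∀ g, g * z = z * g)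
    (hzH : z ∈ H) (q : G ⧸ H) : z • q = q := by
  obtain ⟨g, rfl⟩ := QuotientGroup.mk_surjective q
  show QuotientGroup.mk (z * g) = _
  rw [← hz]
  rw [QuotientGroup.eq]
  simpa using hzH

lemma torus_triv (H : Subgroup (TorusKnotGroup m p)) (i : Fin m)
    (hzH : PresentedGroup.of i ^ p i ∈ H) (j : Fin m) (q : TorusKnotGroup m p ⧸ H) :
    (PresentedGroup.of j : TorusKnotGroup m p) ^ p j • q = q := by
  rw [torus_rel m p j i]
  exact smul_triv_of_mem H _ (torus_central m p i) hzH q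

lemma stdHom_pow_one (H : Subgroup (TorusKnotGroup m p)) (i : Fin m)
    (hzH : PresentedGroup.of i ^ p i ∈ H) (j : Fin m) {n : ℕ} (e : TorusKnotGroup m p ⧸ H ≃ Fin n) :
    stdHom H e (PresentedGroup.of j) ^ p j = 1 := by
  rw [← map_pow]
  ext a
  obtain ⟨q, rfl⟩ := e.surjective a
  rw [stdHom_apply, torus_triv m p H i hzH]
  rfl

lemma stdHom_cyc (H : Subgroup (TorusKnotGroup m p)) (j : Fin m) {n : ℕ}
    (e : TorusKnotGroup m p ⧸ H ≃ Fin n) :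
    cyc (stdHom H e (PresentedGroup.of j)) =
      cyc (MulAction.toPerm (PresentedGroup.of j : TorusKnotGroup m p) :
        Equiv.Perm (TorusKnotGroup m p ⧸ H)) := by
  symm
  apply cyc_conj e
  intro a
  rw [stdHom_apply]; rfl

lemma cyc_ge (n q : ℕ) (hq : 0 < q) (x : Equiv.Perm (Fin n)) (hx : x ^ q = 1) :
    (n : ℝ) / q ≤ cyc x := by
  have := card_le_mul_cyc q hq x hx
  rw [Nat.card_fin] at this
  rw [div_le_iff₀ (by exact_mod_cast hq), mul_comm]
  exact_mod_cast this

/-- upper bound for homs with finite order generators -/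
lemma torus_T_count (n : ℕ) (hn : 1 ≤ n)
    (T : Set (TorusKnotGroup m p →* Equiv.Perm (Fin n))) (c : Fin m → ℝ)
    (hT : ∀ φ ∈ T, ∀ i, (n : ℝ) / p i + c i ≤ cyc (φ (PresentedGroup.of i))) :
    (Nat.card T : ℝ) ≤ (4 ^ n * n.factorial) ^ m * (n : ℝ) ^ (-((n : ℝ) * (∑ i, (1 : ℝ) / p i) + ∑ i, c i)) := by
  have h1 := torus_hom_count m p n T (fun i => {x | (n : ℝ) / p i + c i ≤ cyc x}) hT
  calc (Nat.card T : ℝ) ≤ ∏ i, (Nat.card ({x : Equiv.Perm (Fin n) | (n : ℝ) / p i + c i ≤ cyc x} : Set _) : ℝ) := by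
        exact_mod_cast h1
    _ ≤ ∏ i, (4 ^ n * n.factorial * (n : ℝ) ^ (-((n : ℝ) / p i + c i))) := by
        apply Finset.prod_le_prod
        · intros; positivity
        · intro i _
          exact card_cyc_ge n hn _ _ (fun x hx => hx)
    _ = _ := by
        rw [Finset.prod_mul_distrib, Finset.prod_const, Finset.card_univ, Fintype.card_fin,
          ← Real.rpow_sum_of_pos (by exact_mod_cast hn)]
        congr 2
        rw [Finset.sum_neg_distrib, Finset.sum_add_distrib, Finset.mul_sum]
        congr 2
        apply Finset.sum_congr rfl
        intros; ring

lemma s_bound (i0 : Fin m) (hp : ∀ i, 0 < p i) (n : ℕ) (hn : 1 ≤ n) :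
    (({K : Subgroup (TorusKnotGroup m p) | K.index = n ∧ PresentedGroup.of i0 ^ p i0 ∈ K}).ncard : ℝ) * n.factorial
      ≤ n * ((4 ^ n * n.factorial) ^ m * (n : ℝ) ^ (-((n : ℝ) * (∑ i, (1 : ℝ) / p i)))) := by
  have := torus_hom_finite m p (Equiv.Perm (Fin n))
  set T : Set (TorusKnotGroup m p →* Equiv.Perm (Fin n)) :=
    {φ | ∀ i, φ (PresentedGroup.of i) ^ p i = 1} with hT
  have h1 := (subgroups_upper hn {K : Subgroup (TorusKnotGroup m p) | K.index = n ∧ PresentedGroup.of i0 ^ p i0 ∈ K}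
    (fun H hH => hH.1) T (Set.toFinite _) (by
      intro H hH e j
      exact stdHom_pow_one m p H i0 hH.2 j e)).2
  have h2 := torus_T_count m p n hn T (fun _ => 0) (by
    intro φ hφ i
    rw [add_zero]
    exact cyc_ge n (p i) (hp i) _ (hφ i))
  simp only [Finset.sum_const_zero, add_zero] at h2
  calc _ ≤ (n : ℝ) * Nat.card T := by exact_mod_cast h1
    _ ≤ _ := by gcongr

lemma bad1_bound (i0 : Fin m) (hp : ∀ i, 0 < p i) (n : ℕ) (hn : 1 ≤ n) (c : ℝ) :
    (({K : Subgroup (TorusKnotGroup m p) | K.index = n ∧ PresentedGroup.of i0 ^ p i0 ∈ K ∧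
      ∃ i, (n : ℝ) / p i + c ≤ cyc (MulAction.toPerm (PresentedGroup.of i : TorusKnotGroup m p) :
        Equiv.Perm (TorusKnotGroup m p ⧸ K))}).ncard : ℝ) * n.factorial
      ≤ n * (m * ((4 ^ n * n.factorial) ^ m * (n : ℝ) ^ (-((n : ℝ) * (∑ i, (1 : ℝ) / p i) + c)))) := by
  have := torus_hom_finite m p (Equiv.Perm (Fin n))
  set T : Fin m → Set (TorusKnotGroup m p →* Equiv.Perm (Fin n)) := fun j =>
    {φ | (∀ i, φ (PresentedGroup.of i) ^ p i = 1) ∧ (n : ℝ) / p j + c ≤ cyc (φ (PresentedGroup.of j))} with hT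
  have h1 := (subgroups_upper hn {K : Subgroup (TorusKnotGroup m p) | K.index = n ∧ PresentedGroup.of i0 ^ p i0 ∈ K ∧
      ∃ i, (n : ℝ) / p i + c ≤ cyc (MulAction.toPerm (PresentedGroup.of i : TorusKnotGroup m p) :
        Equiv.Perm (TorusKnotGroup m p ⧸ K))}
    (fun H hH => hH.1) (⋃ j, T j) (Set.toFinite _) (by
      rintro H ⟨hH1, hH2, i, hH3⟩ e
      rw [Set.mem_iUnion]
      refine ⟨i, fun j => stdHom_pow_one m p H i0 hH2 j e, ?_⟩
      rw [stdHom_cyc]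
      exact hH3)).2
  have h2 : ∀ j, (Nat.card (T j) : ℝ) ≤
      ((4 ^ n * n.factorial) ^ m * (n : ℝ) ^ (-((n : ℝ) * (∑ i, (1 : ℝ) / p i) + c))) := by
    intro j
    have h2 := torus_T_count m p n hn (T j) (fun i => if i = j then c else 0) (by
      intro φ hφ i
      by_cases h : i = j
      · subst h
        rw [if_pos rfl]; exact hφ.2
      · rw [if_neg h, add_zero]
        exact cyc_ge n (p i) (hp i) _ (hφ.1 i))
    simpa using h2
  have h3 : Nat.card (⋃ j, T j) ≤ ∑ j, Nat.card (T j) := by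
    classical
    have e : (⋃ j, T j) = ((Finset.univ.biUnion (fun j => (Set.toFinite (T j)).toFinset) : Finset _) : Set _) := by
      ext φ; simp
    have e2 : ∀ j, Nat.card (T j) = ((Set.toFinite (T j)).toFinset).card := fun j =>
      Set.ncard_eq_toFinset_card _ _
    rw [e]
    simp only [e2]
    have e3 := Set.ncard_coe_finset (Finset.univ.biUnion (fun j => (Set.toFinite (T j)).toFinset))
    refine le_trans (le_of_eq e3) Finset.card_biUnion_le
  calc _ ≤ (n : ℝ) * Nat.card (⋃ j, T j) := by exact_mod_cast h1
    _ ≤ n * ∑ j, (Nat.card (T j) : ℝ) := by gcongr; exact_mod_cast h3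
    _ ≤ _ := by
      gcongr
      refine (Finset.sum_le_sum (fun j _ => h2 j)).trans ?_
      simp

lemma lower_bound (n : ℕ) (hn : 1 ≤ n) :
    Nat.card {x : Fin m → Equiv.Perm (Fin n) // (∀ i, x i ^ p i = 1) ∧ TransTuple x} ≤
      Nat.card {H : Subgroup (TorusKnotGroup m p) // H.index = n} * n.factorial := by
  have := torus_hom_finite m p (Equiv.Perm (Fin n))
  classical
  refine le_trans ?_ (subgroups_lower hn (torus_fin m p n hn)
    {φ : TorusKnotGroup m p →* Equiv.Perm (Fin n) | ∀ a b, ∃ g, φ g a = b} (fun φ hφ => hφ))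
  have hrel : ∀ x : {x : Fin m → Equiv.Perm (Fin n) // (∀ i, x i ^ p i = 1) ∧ TransTuple x},
      ∀ r ∈ torusRels m p, FreeGroup.lift x.1 r = 1 := by
    rintro ⟨x, hx, ht⟩ r ⟨i, j, rfl⟩
    simp [hx]
  have hmem : ∀ x, PresentedGroup.toGroup (hrel x) ∈
      {φ : TorusKnotGroup m p →* Equiv.Perm (Fin n) | ∀ a b, ∃ g, φ g a = b} := by
    intro x a b
    set φ := PresentedGroup.toGroup (hrel x) with hφ
    let S : Finset (Fin n) := Finset.univ.filter (fun b => ∃ g, φ g a = b)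
    have ha : a ∈ S := by
      simp only [S, Finset.mem_filter, Finset.mem_univ, true_and]
      exact ⟨1, by simp⟩
    rcases x.2.2 S (by
      intro i c hc
      simp only [S, Finset.mem_filter, Finset.mem_univ, true_and] at hc ⊢
      obtain ⟨g, hg⟩ := hc
      refine ⟨PresentedGroup.of i * g, ?_⟩
      rw [map_mul, Equiv.Perm.mul_apply, hg, hφ, PresentedGroup.toGroup.of]) with h | h
    · rw [h] at ha; simp at ha
    · have : b ∈ S := by rw [h]; simp
      simpa only [S, Finset.mem_filter, Finset.mem_univ, true_and] using this
  apply Nat.card_le_card_of_injective (fun x => (⟨PresentedGroup.toGroup (hrel x), hmem x⟩ :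
    {φ : TorusKnotGroup m p →* Equiv.Perm (Fin n) | ∀ a b, ∃ g, φ g a = b}))
  intro x y e
  apply Subtype.ext
  funext i
  have e1 := congrArg (fun f => f.1 (PresentedGroup.of i)) e
  simpa only [PresentedGroup.toGroup.of] using e1

end


lemma asym_zero (A Q δ : ℝ) (hA : 0 < A) (hδ : 0 < δ) :
    Tendsto (fun n : ℕ => A ^ n * (n : ℝ) ^ (Q - δ * n)) atTop (𝓝 0) := by
  have hlog : Tendsto (fun n : ℕ => Real.log n) atTop atTop :=
    Real.tendsto_log_atTop.comp tendsto_natCast_atTop_atTop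
  have hexp : Tendsto (fun n : ℕ => Real.exp (-(n : ℝ))) atTop (𝓝 0) :=
    Real.tendsto_exp_neg_atTop_nhds_zero.comp tendsto_natCast_atTop_atTop
  refine tendsto_of_tendsto_of_tendsto_of_le_of_le' tendsto_const_nhds hexp
    (Eventually.of_forall fun n => by positivity) ?_
  filter_upwards [hlog.eventually_ge_atTop (2 * (Real.log A + 1) / δ),
    hlog.eventually_ge_atTop 0,
    tendsto_natCast_atTop_atTop.eventually_ge_atTop (2 * Q / δ), eventually_ge_atTop 1] with n h1 h0 h2 h3
  have hn : (0 : ℝ) < n := by exact_mod_cast h3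
  rw [Real.rpow_def_of_pos hn]
  have : A ^ n = Real.exp (n * Real.log A) := by
    rw [mul_comm, Real.exp_mul, Real.exp_log hA, Real.rpow_natCast]
  rw [this, ← Real.exp_add]
  apply Real.exp_le_exp.2
  rw [div_le_iff₀ hδ] at h1 h2
  have a1 : (Q - δ / 2 * n) * Real.log n ≤ 0 :=
    mul_nonpos_of_nonpos_of_nonneg (by linarith) h0
  have a2 : (n : ℝ) * (Real.log A + 1 - δ / 2 * Real.log n) ≤ 0 :=
    mul_nonpos_of_nonneg_of_nonpos hn.le (by linarith)
  nlinarith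

lemma fact_lower (n : ℕ) : (n : ℝ) ^ n * ((3 : ℝ) ^ n)⁻¹ ≤ n.factorial := by
  have h := Real.pow_div_factorial_le_exp (x := (n : ℝ)) (by positivity) n
  rw [div_le_iff₀ (by positivity)] at h
  rw [← div_eq_mul_inv, div_le_iff₀ (by positivity), mul_comm]
  refine h.trans ?_
  gcongr
  have : Real.exp n = (Real.exp 1) ^ n := by
    rw [← Real.exp_nat_mul, mul_one]
  rw [this]
  have := Real.exp_one_lt_d9
  gcongr
  linarith

section
variable (m : ℕ) (p : Fin m → ℕ)

lemma s_bound2 (i0 : Fin m) (hp : ∀ i, 0 < p i)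
    (h : ∑ i, (1 : ℝ) / (p i : ℝ) < (m : ℝ) - 1) (n N : ℕ) (hN : 1 ≤ N) (hNn : 2 * N ≤ n) :
    (({K : Subgroup (TorusKnotGroup m p) | K.index = N ∧ PresentedGroup.of i0 ^ p i0 ∈ K}).ncard : ℝ)
      ≤ n * (4 ^ n) ^ m * (n : ℝ) ^ (((m : ℝ) - 1 - ∑ i, (1 : ℝ) / (p i : ℝ)) / 2 * n) := by
  have h1 := s_bound m p i0 hp N hN
  set β := ∑ i, (1 : ℝ) / (p i : ℝ) with hβ
  have hm : 1 ≤ m := i0.pos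
  have hf : (0 : ℝ) < N.factorial := by positivity
  have hN0 : (0 : ℝ) < N := by exact_mod_cast hN
  obtain ⟨k, rfl⟩ : ∃ k, m = k + 1 := ⟨m - 1, by omega⟩
  have hfN : (N.factorial : ℝ) ≤ (N : ℝ) ^ N := by exact_mod_cast Nat.factorial_le_pow N
  have h2 : (({K : Subgroup (TorusKnotGroup (k+1) p) | K.index = N ∧ PresentedGroup.of i0 ^ p i0 ∈ K}).ncard : ℝ)
      ≤ N * ((4 ^ N) ^ (k+1) * (N.factorial : ℝ) ^ k * (N : ℝ) ^ (-((N : ℝ) * β))) := by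
    refine le_of_mul_le_mul_right (h1.trans (le_of_eq ?_)) hf
    ring
  refine h2.trans ?_
  have h3 : (N.factorial : ℝ) ^ k * (N : ℝ) ^ (-((N : ℝ) * β)) ≤ (n : ℝ) ^ (((↑(k+1) : ℝ) - 1 - β) / 2 * n) := by
    calc _ ≤ ((N : ℝ) ^ N) ^ k * (N : ℝ) ^ (-((N : ℝ) * β)) := by gcongr
      _ = (N : ℝ) ^ (((k : ℝ) - β) * N) := by
        rw [← pow_mul, ← Real.rpow_natCast, ← Real.rpow_add hN0]
        congr 1; push_cast; ring
      _ ≤ (n : ℝ) ^ (((k : ℝ) - β) * N) := by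
        apply Real.rpow_le_rpow hN0.le
        · exact_mod_cast (by omega : N ≤ n)
        · apply mul_nonneg _ hN0.le
          push_cast at h; linarith
      _ ≤ _ := by
        apply Real.rpow_le_rpow_of_exponent_le
        · exact_mod_cast (by omega : 1 ≤ n)
        · push_cast at h ⊢
          have : (2 : ℝ) * N ≤ n := by exact_mod_cast hNn
          have h5 : 0 < (k : ℝ) - β := by linarith
          nlinarith
  have hNn' : (N : ℝ) ≤ n := by exact_mod_cast (by omega : N ≤ n)
  calc _ = N * (4 ^ N) ^ (k+1) * ((N.factorial : ℝ) ^ k * (N : ℝ) ^ (-((N : ℝ) * β))) := by ring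
    _ ≤ _ := by
      gcongr
      · norm_num
      · omega

lemma bad2_bound (i0 : Fin m) (hp : ∀ i, 0 < p i)
    (h : ∑ i, (1 : ℝ) / (p i : ℝ) < (m : ℝ) - 1) (n : ℕ) (hn : 1 ≤ n) :
    (({K : Subgroup (TorusKnotGroup m p) | K.index = n ∧ PresentedGroup.of i0 ^ p i0 ∉ K}).ncard : ℝ)
      ≤ (8 ^ m) ^ n * (n : ℝ) ^ (2 + ((m : ℝ) - 1 - ∑ i, (1 : ℝ) / (p i : ℝ)) / 2 * n) := by
  obtain ⟨S, hS, hSm⟩ := torus_gens m p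
  have h1 := count_bad2 m S hS hSm (PresentedGroup.of i0 ^ p i0) (torus_central m p i0) n hn
    (torus_fin m p)
  have hn0 : (0 : ℝ) < n := by exact_mod_cast hn
  set E := (n : ℝ) ^ (((m : ℝ) - 1 - ∑ i, (1 : ℝ) / (p i : ℝ)) / 2 * n) with hE
  calc _ ≤ (2 : ℝ) ^ (m * n) * ∑ N ∈ Finset.Icc 1 (n / 2), (({K : Subgroup (TorusKnotGroup m p) | K.index = N ∧ PresentedGroup.of i0 ^ p i0 ∈ K}).ncard : ℝ) := by
        exact_mod_cast h1
    _ ≤ 2 ^ (m * n) * ∑ N ∈ Finset.Icc 1 (n / 2), (n * (4 ^ n) ^ m * E) := by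
        gcongr with N hN
        rw [Finset.mem_Icc] at hN
        exact s_bound2 m p i0 hp h n N hN.1 (by omega)
    _ ≤ 2 ^ (m * n) * (n * (n * (4 ^ n) ^ m * E)) := by
        rw [Finset.sum_const, nsmul_eq_mul]
        gcongr
        rw [Nat.card_Icc]
        omega
    _ = _ := by
        rw [Real.rpow_add hn0, ← hE]
        have : (8 : ℝ) = 2 * 4 := by norm_num
        rw [this]
        norm_cast
        rw [mul_pow, mul_pow, pow_mul, ← pow_mul 4, ← pow_mul 4, mul_comm n m]
        push_cast
        ring

lemma lower_final (hp : ∀ i, 2 ≤ p i)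
    (h : ∑ i, (1 : ℝ) / (p i : ℝ) < (m : ℝ) - 1) : ∀ᶠ n : ℕ in atTop,
    (n.factorial:ℝ)^m/2 * (n:ℝ)^(-((n:ℝ)*(∑ i,(1:ℝ)/(p i:ℝ)) + ∑ i,(p i:ℝ))) ≤
     (Nat.card {H : Subgroup (TorusKnotGroup m p) // H.index = n} : ℝ) * n.factorial := by
  filter_upwards [trans_lower m p hp h, eventually_ge_atTop 1] with n h1 hn
  refine h1.trans ?_
  exact_mod_cast lower_bound m p n hn

lemma lower_final2 (i0 : Fin m) (n : ℕ) (hn : 1 ≤ n) (a P β : ℝ)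
    (h1 : (n.factorial:ℝ)^m/2 * (n:ℝ)^(-((n:ℝ)*β + P)) ≤ a * n.factorial) :
    ((3 : ℝ) ^ m) ⁻¹ ^ n / 2 * (n : ℝ) ^ (((m : ℝ) - 1 - β) * n - P) ≤ a := by
  have hm : 1 ≤ m := i0.pos
  obtain ⟨k, rfl⟩ : ∃ k, m = k + 1 := ⟨m - 1, by omega⟩
  have hn0 : (0 : ℝ) < n := by exact_mod_cast hn
  have h2 : (n.factorial:ℝ)^k/2 * (n:ℝ)^(-((n:ℝ)*β + P)) ≤ a := by
    refine le_of_mul_le_mul_right (le_trans (le_of_eq ?_) h1) (show (0 : ℝ) < n.factorial by positivity)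
    ring
  refine le_trans ?_ h2
  have h3 := fact_lower n
  calc _ ≤ ((3 : ℝ) ^ k) ⁻¹ ^ n / 2 * (n : ℝ) ^ (((↑(k+1) : ℝ) - 1 - β) * n - P) := by
        gcongr
        · norm_num
        · omega
    _ = ((n : ℝ) ^ n * ((3 : ℝ) ^ n)⁻¹) ^ k / 2 * (n:ℝ)^(-((n:ℝ)*β + P)) := by
        have : (n : ℝ) ^ (((↑(k+1) : ℝ) - 1 - β) * n - P) = ((n : ℝ) ^ n) ^ k * (n:ℝ)^(-((n:ℝ)*β + P)) := by
          rw [← pow_mul, ← Real.rpow_natCast, ← Real.rpow_add hn0]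
          congr 1; push_cast; ring
        rw [this, mul_pow, inv_pow, inv_pow, ← pow_mul 3, ← pow_mul 3, mul_comm n k]
        ring
    _ ≤ _ := by gcongr

lemma good_of (hp : ∀ i, 2 ≤ p i) (i0 : Fin m) (ε : ℝ) (hε : 0 < ε) (n : ℕ) (hn : 1 ≤ n)
    (hn2 : 2 < ε * n) (H : Subgroup (TorusKnotGroup m p)) (hH : H.index = n)
    (hz : PresentedGroup.of i0 ^ p i0 ∈ H)
    (hc : ∀ i, (cyc (MulAction.toPerm (PresentedGroup.of i : TorusKnotGroup m p) :
        Equiv.Perm (TorusKnotGroup m p ⧸ H)) : ℝ) < (n : ℝ) / p i + ε / (2 * m) * n) :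
    |(betti1 H : ℝ) / (n : ℝ) - ((m : ℝ) - 1 - ∑ i, (1 : ℝ) / (p i : ℝ))| < ε := by
  have hm : 0 < m := i0.pos
  have hp0 : ∀ i, 0 < p i := fun i => by have := hp i; omega
  obtain ⟨b1, b2⟩ := betti_formula m p hm hp0 H n hn hH (fun i q => torus_triv m p H i0 hz i q)
  set c : Fin m → ℕ := fun i => cyc (MulAction.toPerm (PresentedGroup.of i : TorusKnotGroup m p) :
        Equiv.Perm (TorusKnotGroup m p ⧸ H)) with hcdef
  have hn0 : (0 : ℝ) < n := by exact_mod_cast hn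
  have hm0 : (0 : ℝ) < m := by exact_mod_cast hm
  have hlow : ∀ i, (n : ℝ) / p i ≤ c i := by
    intro i
    obtain ⟨e⟩ := index_equiv hn H hH
    have := cyc_ge n (p i) (hp0 i) _ (stdHom_pow_one m p H i0 hz i e)
    rwa [stdHom_cyc] at this
  have s1 : (n : ℝ) * ∑ i, (1 : ℝ) / (p i : ℝ) ≤ ∑ i, (c i : ℝ) := by
    rw [Finset.mul_sum]
    apply Finset.sum_le_sum
    intro i _
    refine le_trans (le_of_eq ?_) (hlow i)
    ring
  have s2 : ∑ i, (c i : ℝ) ≤ (n : ℝ) * ∑ i, (1 : ℝ) / (p i : ℝ) + ε / 2 * n := by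
    calc _ ≤ ∑ i, ((n : ℝ) / p i + ε / (2 * m) * n) := Finset.sum_le_sum (fun i _ => (hc i).le)
      _ = _ := by
        rw [Finset.sum_add_distrib, Finset.mul_sum, Finset.sum_const, Finset.card_univ, Fintype.card_fin, nsmul_eq_mul]
        congr 1
        · apply Finset.sum_congr rfl; intros; ring
        · field_simp
  have b1' : (m : ℝ) * n + 1 ≤ betti1 H + n + ∑ i, (c i : ℝ) := by exact_mod_cast b1
  have b2' : betti1 H + n + ∑ i, (c i : ℝ) ≤ (m : ℝ) * n + 2 := by exact_mod_cast b2
  have e : (betti1 H : ℝ) / (n : ℝ) - ((m : ℝ) - 1 - ∑ i, (1 : ℝ) / (p i : ℝ)) =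
    (betti1 H - m * n + n + n * ∑ i, (1 : ℝ) / (p i : ℝ)) / n := by field_simp; ring
  rw [e, abs_div, abs_of_pos hn0, div_lt_iff₀ hn0, abs_lt]
  have : 0 < ε * n := by positivity
  constructor <;> linarith

end

theorem betti_number_growth (m : ℕ) (p : Fin m → ℕ) (hp : ∀ i, 2 ≤ p i)
    (h : ∑ i, (1 : ℝ) / (p i : ℝ) < (m : ℝ) - 1) (ε : ℝ) (hε : 0 < ε) :
    Filter.Tendsto (fun n : ℕ =>
      subgroupProb (TorusKnotGroup m p) n (fun H =>
        |(betti1 H : ℝ) / (n : ℝ) - ((m : ℝ) - 1 - ∑ i, (1 : ℝ) / (p i : ℝ))| < ε))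
      Filter.atTop (𝓝 1) := by
  have hm : 0 < m := by
    rcases Nat.eq_zero_or_pos m with h0 | h0
    · subst h0; simp at h; linarith
    · exact h0
  have hm0 : (0 : ℝ) < m := by exact_mod_cast hm
  have hp0 : ∀ i, 0 < p i := fun i => by have := hp i; omega
  let i0 : Fin m := ⟨0, hm⟩
  set β := ∑ i, (1 : ℝ) / (p i : ℝ) with hβ
  set P := ∑ i, (p i : ℝ) with hP
  set α := (m : ℝ) - 1 - β with hα
  have hα0 : 0 < α := by linarith
  set δ := ε / (2 * m) with hδ
  have hδ0 : 0 < δ := by positivity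
  let E1 : ℕ → ℝ := fun n => (2 * m) * ((4 ^ m : ℝ) ^ n * (n : ℝ) ^ ((1 + P) - δ * n))
  let E2 : ℕ → ℝ := fun n => 2 * ((24 ^ m : ℝ) ^ n * (n : ℝ) ^ ((2 + P) - α / 2 * n))
  have hE1 : Tendsto E1 atTop (𝓝 0) := by
    have := (asym_zero (4 ^ m : ℝ) (1 + P) δ (by positivity) hδ0).const_mul (2 * (m : ℝ))
    simpa [E1] using this
  have hE2 : Tendsto E2 atTop (𝓝 0) := by
    have := (asym_zero (24 ^ m : ℝ) (2 + P) (α / 2) (by positivity) (by positivity)).const_mul (2 : ℝ)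
    simpa [E2] using this
  have hlim : Tendsto (fun n => 1 - (E1 n + E2 n)) atTop (𝓝 1) := by
    simpa using (hE1.add hE2).const_sub 1
  have hbig : ∀ᶠ n : ℕ in atTop, 2 < ε * n := by
    have : Tendsto (fun n : ℕ => ε * (n : ℝ)) atTop atTop :=
      tendsto_natCast_atTop_atTop.const_mul_atTop hε
    exact this.eventually_gt_atTop 2
  have key : ∀ᶠ n : ℕ in atTop, 1 - (E1 n + E2 n) ≤ subgroupProb (TorusKnotGroup m p) n (fun H =>
        |(betti1 H : ℝ) / (n : ℝ) - α| < ε) ∧ subgroupProb (TorusKnotGroup m p) n (fun H =>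
        |(betti1 H : ℝ) / (n : ℝ) - α| < ε) ≤ 1 := by
    filter_upwards [hbig, lower_final m p hp h, eventually_ge_atTop 1] with n hn2 hlow hn
    have hn0 : (0 : ℝ) < n := by exact_mod_cast hn
    have hfin := torus_fin m p n hn
    set a : ℝ := (Nat.card {H : Subgroup (TorusKnotGroup m p) // H.index = n} : ℝ) with ha
    have hlow2 := lower_final2 m i0 n hn a P β hlow
    have ha0 : 0 < a := lt_of_lt_of_le (by positivity) hlow2
    set G : Set (Subgroup (TorusKnotGroup m p)) := {H | H.index = n ∧ |(betti1 H : ℝ) / (n : ℝ) - α| < ε} with hG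
    set B1 : Set (Subgroup (TorusKnotGroup m p)) := {K : Subgroup (TorusKnotGroup m p) | K.index = n ∧ PresentedGroup.of i0 ^ p i0 ∈ K ∧
      ∃ i, (n : ℝ) / p i + δ * n ≤ cyc (MulAction.toPerm (PresentedGroup.of i : TorusKnotGroup m p) :
        Equiv.Perm (TorusKnotGroup m p ⧸ K))} with hB1
    set B2 : Set (Subgroup (TorusKnotGroup m p)) := {K : Subgroup (TorusKnotGroup m p) | K.index = n ∧ PresentedGroup.of i0 ^ p i0 ∉ K} with hB2
    have hcov : {H : Subgroup (TorusKnotGroup m p) | H.index = n} ⊆ G ∪ (B1 ∪ B2) := by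
      intro H hH
      by_cases hz : PresentedGroup.of i0 ^ p i0 ∈ H
      · by_cases hc : ∃ i, (n : ℝ) / p i + δ * n ≤ cyc (MulAction.toPerm (PresentedGroup.of i : TorusKnotGroup m p) :
          Equiv.Perm (TorusKnotGroup m p ⧸ H))
        · exact Or.inr (Or.inl ⟨hH, hz, hc⟩)
        · push Not at hc
          exact Or.inl ⟨hH, good_of m p hp i0 ε hε n hn hn2 H hH hz hc⟩
      · exact Or.inr (Or.inr ⟨hH, hz⟩)
    have fG : G.Finite := hfin.subset (fun H hH => hH.1)
    have f1 : B1.Finite := hfin.subset (fun H hH => hH.1)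
    have f2 : B2.Finite := hfin.subset (fun H hH => hH.1)
    have hsum : a ≤ G.ncard + (B1.ncard + B2.ncard) := by
      have c1 := Set.ncard_le_ncard hcov (fG.union (f1.union f2))
      have c2 := Set.ncard_union_le G (B1 ∪ B2)
      have c3 := Set.ncard_union_le B1 B2
      have c4 : a = ({H : Subgroup (TorusKnotGroup m p) | H.index = n}.ncard : ℝ) := rfl
      rw [c4]
      exact_mod_cast (by omega)
    have hGa : (G.ncard : ℝ) ≤ a := by
      have c1 := Set.ncard_le_ncard (show G ⊆ {H : Subgroup (TorusKnotGroup m p) | H.index = n} from fun H hH => hH.1) hfin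
      have c4 : a = ({H : Subgroup (TorusKnotGroup m p) | H.index = n}.ncard : ℝ) := rfl
      rw [c4]
      exact_mod_cast c1
    have b1 : (B1.ncard : ℝ) ≤ E1 n * a := by
      have c1 := bad1_bound m p i0 hp0 n hn (δ * n)
      refine le_of_mul_le_mul_right (c1.trans ?_) (show (0 : ℝ) < n.factorial by positivity)
      rw [mul_assoc]
      refine le_trans (le_of_eq ?_) (mul_le_mul_of_nonneg_left hlow (show 0 ≤ E1 n by positivity))
      have e1 : (n : ℝ) ^ (-((n : ℝ) * β + δ * n)) * n =
          (n : ℝ) ^ ((1 + P) - δ * n) * (n:ℝ)^(-((n:ℝ)*β + P)) := by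
        rw [← Real.rpow_add hn0]
        rw [← Real.rpow_add_one hn0.ne']
        congr 1; ring
      calc _ = m * (4 ^ n * n.factorial) ^ m * ((n : ℝ) ^ (-((n : ℝ) * β + δ * n)) * n) := by ring
        _ = _ := by
          rw [e1]
          simp only [E1]
          rw [mul_pow, ← pow_mul 4, ← pow_mul 4, mul_comm n m]
          ring
    have b2 : (B2.ncard : ℝ) ≤ E2 n * a := by
      have c1 := bad2_bound m p i0 hp0 h n hn
      refine c1.trans ?_
      refine le_trans (le_of_eq ?_) (mul_le_mul_of_nonneg_left hlow2 (show 0 ≤ E2 n by positivity))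
      have e1 : (n : ℝ) ^ (2 + α / 2 * n) =
          (n : ℝ) ^ ((2 + P) - α / 2 * n) * (n : ℝ) ^ (α * n - P) := by
        rw [← Real.rpow_add hn0]
        congr 1; ring
      rw [e1]
      simp only [E2]
      have e2 : (24 : ℝ) = 8 * 3 := by norm_num
      have e3 : (((3 : ℝ) ^ m) ^ n) * ((3 : ℝ) ^ m) ⁻¹ ^ n = 1 := by
        rw [← mul_pow, mul_inv_cancel₀ (by positivity), one_pow]
      rw [e2, mul_pow, mul_pow]
      linear_combination (-((8 : ℝ) ^ m) ^ n * (n : ℝ) ^ ((2 + P) - α / 2 * n) * (n : ℝ) ^ (α * n - P)) * e3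
    have hprob : subgroupProb (TorusKnotGroup m p) n (fun H =>
        |(betti1 H : ℝ) / (n : ℝ) - α| < ε) = G.ncard / a := rfl
    rw [hprob]
    constructor
    · rw [le_div_iff₀ ha0]
      linarith
    · rw [div_le_one ha0]
      exact hGa
  exact tendsto_of_tendsto_of_tendsto_of_le_of_le' hlim tendsto_const_nhds
    (key.mono fun n hn => hn.1) (key.mono fun n hn => hn.2)
end

section
/- Let Λ = F_r * C_{p_1} * ⋯ * C_{p_m} with r + m − 1 − Σ_{i=1}^m 1/p_i > 0, and let G_n denote an index n subgroup of Λ chosen uniformly at random. Then for every nontrivial conjugacy class K of Λ, 𝔼[Z_K(G_n)] = o(n) as n → ∞. (By the fixed-point characterisation of weak-* convergence of invariant random subgroups, this expresses that G_n converges, as an invariant random subgroup of Λ, to the Dirac mass at the trivial subgroup.) -/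
open Filter Topology Asymptotics
open scoped TensorProduct

/-- the free product `F_r * C_{p_1} * ⋯ * C_{p_m}` of a free group of rank `r` and
cyclic groups of orders `p_1,…,p_m`, as a presented group. -/
abbrev FuchsianFreeProduct (r m : ℕ) (p : Fin m → ℕ) : Type :=
  PresentedGroup {w : FreeGroup (Fin r ⊕ Fin m) | ∃ i : Fin m, w = FreeGroup.of (Sum.inr i) ^ p i}

/-- `Z_g(H)`: the number of fixed points of `g` acting on the coset space `G ⧸ H`.
For any `g` in a conjugacy class `K`, this equals `Z_K(H)`. -/
noncomputable def fixedCosetCount {G : Type*} [Group G] (g : G) (H : Subgroup G) : ℕ :=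
  Nat.card {x : G ⧸ H // g • x = x}

/-- the expectation of `f` over a uniformly random index `n` subgroup of `G` -/
noncomputable def subgroupExp (G : Type*) [Group G] (n : ℕ) (f : Subgroup G → ℝ) : ℝ :=
  (∑' H : {H : Subgroup G // H.index = n}, f H.1) /
    (Nat.card {H : Subgroup G // H.index = n} : ℝ)


namespace IRSAux

open Equiv

section core
variable {J : Type}

def ev {G : Type*} [Group G] (s : J → G) : List (J × ℤ) → G
  | [] => 1
  | a :: M => ev s M * s a.1 ^ a.2

def Conn {α : Type*} (σ : J → Perm α) : Prop :=
  ∀ P : α → Prop, (∀ j x, P (σ j x) ↔ P x) → ∀ x y, P x → P y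

def T (pp : J → ℕ) (n : ℕ) : Type :=
  {σ : J → Perm (Fin n) // (∀ j, σ j ^ pp j = 1) ∧ Conn σ}

instance [Finite J] (pp : J → ℕ) (n : ℕ) : Finite (T pp n) := by
  unfold T; infer_instance

noncomputable instance [Finite J] (pp : J → ℕ) (n : ℕ) : Fintype (T pp n) := Fintype.ofFinite _

theorem ev_map {G H : Type*} [Group G] [Group H] (φ : G →* H) (s : J → G) (L : List (J × ℤ)) :
    φ (ev s L) = ev (fun j => φ (s j)) L := by
  induction L with
  | nil => simp [ev]
  | cons a M ih => simp [ev, ih]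

theorem ev_append {G : Type*} [Group G] (s : J → G) (L M : List (J × ℤ)) :
    ev s (L ++ M) = ev s M * ev s L := by
  induction L with
  | nil => simp [ev]
  | cons a L ih => simp [ev, ih, mul_assoc]

theorem inv_zpow {α : Type*} (f : Perm α) (P : α → Prop) (h : ∀ x, P (f x) ↔ P x) (e : ℤ) (x : α) :
    P ((f ^ e) x) ↔ P x := by
  induction e generalizing x with
  | zero => simp
  | succ n ih => rw [zpow_add_one, Perm.mul_apply, ih, h]
  | pred n ih => rw [zpow_sub_one, Perm.mul_apply, ih, ← h]; simp

theorem inv_ev {α : Type*} (σ : J → Perm α) (P : α → Prop) (h : ∀ j x, P (σ j x) ↔ P x)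
    (L : List (J × ℤ)) (x : α) : P (ev σ L x) ↔ P x := by
  induction L generalizing x with
  | nil => simp [ev]
  | cons a M ih => rw [ev, Perm.mul_apply, ih, inv_zpow _ P (h _)]

variable [Finite J] {pp : J → ℕ}

def Small (F : ∀ n, T pp n → Finset (Fin n)) : Prop :=
  ∀ ε : ℝ, 0 < ε → ∀ᶠ n : ℕ in atTop,
    ∑ σ : T pp n, ((F n σ).card : ℝ) ≤ ε * n * Fintype.card (T pp n)

theorem Small.of_le {ι : Type*} (s : Finset ι) (F : ∀ n, T pp n → Finset (Fin n))
    (G : ι → ∀ n, T pp n → Finset (Fin n)) (hG : ∀ i ∈ s, Small (G i))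
    (h : ∀ n σ, (F n σ).card ≤ ∑ i ∈ s, (G i n σ).card) : Small F := by
  intro ε hε
  have h1 : ∀ i ∈ s, ∀ᶠ n : ℕ in atTop,
      ∑ σ : T pp n, ((G i n σ).card : ℝ) ≤ (ε / (s.card + 1)) * n * Fintype.card (T pp n) :=
    fun i hi => hG i hi _ (by positivity)
  have h2 := (Filter.eventually_all_finset s).2 h1
  filter_upwards [h2] with n hn
  calc ∑ σ : T pp n, ((F n σ).card : ℝ) ≤ ∑ σ : T pp n, ∑ i ∈ s, ((G i n σ).card : ℝ) := by
        refine Finset.sum_le_sum fun σ _ => ?_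
        exact_mod_cast h n σ
    _ = ∑ i ∈ s, ∑ σ : T pp n, ((G i n σ).card : ℝ) := Finset.sum_comm
    _ ≤ ∑ i ∈ s, (ε / (s.card + 1)) * n * Fintype.card (T pp n) := Finset.sum_le_sum hn
    _ = (s.card / (s.card + 1)) * (ε * n * Fintype.card (T pp n)) := by
        rw [Finset.sum_const, nsmul_eq_mul]; ring
    _ ≤ 1 * (ε * n * Fintype.card (T pp n)) := by
        apply mul_le_mul_of_nonneg_right _ (by positivity)
        rw [div_le_one (by positivity)]; linarith
    _ = _ := one_mul _

open Classical in
theorem small_of_pairs (F : ∀ n, T pp n → Finset (Fin n))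
    (Bad : ∀ n, T pp n → Fin n → Fin n → Prop) (C : ℕ)
    (hBad : ∀ n σ z, z ∈ F n σ → ∃ B : Finset (Fin n), B.card ≤ C ∧
      ∀ w ∈ F n σ, Bad n σ z w → w ∈ B)
    (R : ∀ n, T pp n → Fin n → Fin n → T pp n → Prop)
    (hR : ∀ n σ z w, z ∈ F n σ → w ∈ F n σ → ¬ Bad n σ z w → ∃ τ, R n σ z w τ)
    (hinj : ∀ n σ σ' z w w' τ, R n σ z w τ → R n σ' z w' τ → σ = σ' ∧ w = w') : Small F := by
  have key : ∀ n, ∑ σ : T pp n, ((F n σ).card ^ 2) ≤ (C + 1) * n * Fintype.card (T pp n) := by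
    intro n
    let S : Finset (Σ _ : T pp n, Fin n × Fin n) := Finset.univ.sigma fun σ =>
      ((F n σ) ×ˢ (F n σ)).filter fun q => ¬ Bad n σ q.1 q.2
    have hS : S.card ≤ Fintype.card (T pp n) * n := by
      have : ∀ q, ∃ τ, q ∈ S → R n q.1 q.2.1 q.2.2 τ := by
        rintro ⟨σ, z, w⟩
        by_cases hq : (⟨σ, z, w⟩ : Σ _ : T pp n, Fin n × Fin n) ∈ S
        · have hq' := hq
          simp only [S, Finset.mem_sigma, Finset.mem_filter, Finset.mem_product] at hq'
          obtain ⟨τ, hτ⟩ := hR n σ z w hq'.2.1.1 hq'.2.1.2 hq'.2.2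
          exact ⟨τ, fun _ => hτ⟩
        · exact ⟨σ, fun h => absurd h hq⟩
      choose Φ hΦ using this
      have := Finset.card_le_card_of_injOn (s := S) (t := (Finset.univ : Finset (T pp n × Fin n)))
        (fun q => (Φ q, q.2.1)) (by intro _ _; simp) (by
          rintro ⟨σ, z, w⟩ hq ⟨σ', z', w'⟩ hq' heq
          simp only [Prod.mk.injEq] at heq
          obtain ⟨h1, rfl⟩ := heq
          have h2 := hΦ _ hq
          rw [h1] at h2
          obtain ⟨rfl, rfl⟩ := hinj n σ σ' z w w' _ h2 (hΦ _ hq')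
          rfl)
      simpa using this
    have hs : ∀ σ : T pp n, (F n σ).card ^ 2 ≤
        (((F n σ) ×ˢ (F n σ)).filter fun q => ¬ Bad n σ q.1 q.2).card + C * n := by
      intro σ
      have h1 := Finset.card_filter_add_card_filter_not (s := (F n σ) ×ˢ (F n σ)) (fun q => Bad n σ q.1 q.2)
      rw [Finset.card_product] at h1
      have h2 : (((F n σ) ×ˢ (F n σ)).filter fun q => Bad n σ q.1 q.2).card ≤ C * n := by
        have h3 : (((F n σ) ×ˢ (F n σ)).filter fun q => Bad n σ q.1 q.2) =
          ((F n σ).sigma fun z => (F n σ).filter (fun w => Bad n σ z w)).map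
            (Equiv.sigmaEquivProd (Fin n) (Fin n)).toEmbedding := by
          ext ⟨a, b⟩
          simp [Equiv.sigmaEquivProd, and_assoc]
        rw [h3, Finset.card_map, Finset.card_sigma]
        calc _ ≤ ∑ z ∈ F n σ, C := Finset.sum_le_sum fun z hz => by
              obtain ⟨B, hB, hB'⟩ := hBad n σ z hz
              refine (Finset.card_le_card (t := B) fun w hw => ?_).trans hB
              rw [Finset.mem_filter] at hw
              exact hB' w hw.1 hw.2
          _ = (F n σ).card * C := by simp
          _ ≤ n * C := Nat.mul_le_mul_right _ (by simpa using Finset.card_le_univ (F n σ))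
          _ = _ := mul_comm _ _
      rw [pow_two]; omega
    calc _ ≤ ∑ σ : T pp n, ((((F n σ) ×ˢ (F n σ)).filter fun q => ¬ Bad n σ q.1 q.2).card + C * n) :=
          Finset.sum_le_sum fun σ _ => hs σ
      _ = S.card + Fintype.card (T pp n) * (C * n) := by
          rw [Finset.sum_add_distrib, Finset.card_sigma]; simp
      _ ≤ _ := by nlinarith
  intro ε hε
  have hlim : ∀ᶠ n : ℕ in atTop, ((C : ℝ) + 1) / (ε / 2) ^ 2 ≤ n :=
    tendsto_natCast_atTop_atTop.eventually_ge_atTop _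
  filter_upwards [hlim, eventually_gt_atTop 0] with n hn hn0
  have hn0' : (0 : ℝ) < n := by exact_mod_cast hn0
  set δ := ε / 2 with hδ
  have hδ0 : 0 < δ := by positivity
  have hk : ∑ σ : T pp n, ((F n σ).card : ℝ) ^ 2 ≤ (C + 1) * n * Fintype.card (T pp n) := by
    exact_mod_cast key n
  have h1 : ∀ x : ℝ, 0 ≤ x → x ≤ δ * n + x ^ 2 / (δ * n) := by
    intro x hx
    have h0 : 0 < δ * n := by positivity
    rw [← sub_le_iff_le_add', le_div_iff₀ h0]
    nlinarith [sq_nonneg (x - δ * n), mul_nonneg hx h0.le]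
  have hC : ((C : ℝ) + 1) / δ ≤ δ * n := by
    rw [div_le_iff₀ (by positivity)] at hn
    rw [div_le_iff₀ hδ0]; nlinarith
  calc ∑ σ : T pp n, ((F n σ).card : ℝ)
      ≤ ∑ σ : T pp n, (δ * n + ((F n σ).card : ℝ) ^ 2 / (δ * n)) :=
        Finset.sum_le_sum fun σ _ => h1 _ (by positivity)
    _ = Fintype.card (T pp n) * (δ * n) + (∑ σ : T pp n, ((F n σ).card : ℝ) ^ 2) / (δ * n) := by
        rw [Finset.sum_add_distrib, Finset.sum_div]; simp
    _ ≤ Fintype.card (T pp n) * (δ * n) + ((C + 1) * n * Fintype.card (T pp n)) / (δ * n) := by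
        gcongr
    _ = Fintype.card (T pp n) * (δ * n) + ((C + 1) / δ) * Fintype.card (T pp n) := by
        field_simp
    _ ≤ Fintype.card (T pp n) * (δ * n) + (δ * n) * Fintype.card (T pp n) := by gcongr
    _ = _ := by rw [hδ]; ring

theorem swap_conj_zpow {α : Type*} [DecidableEq α] (z w : α) (f : Perm α) (e : ℤ) :
    (swap z w * f * swap z w) ^ e = swap z w * f ^ e * swap z w := by
  have := conj_zpow (i := e) (a := swap z w) (b := f)
  simpa using this

theorem ev_update_eq {α : Type*} [DecidableEq α] [DecidableEq J] (σ : J → Perm α) (j : J) (z w : α)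
    (L : List (J × ℤ)) (y : α)
    (h : ∀ i ≤ L.length, ev σ (L.take i) y ≠ z ∧ ev σ (L.take i) y ≠ w) :
    ev (Function.update σ j (swap z w * σ j * swap z w)) L y = ev σ L y := by
  induction L generalizing y with
  | nil => simp [ev]
  | cons a M ih =>
    have h0 := h 0 (by simp)
    have h1 := h 1 (by simp)
    simp only [List.take_zero, ev, Perm.one_apply, List.take_succ_cons, Perm.mul_apply] at h0 h1
    have hs : (Function.update σ j (swap z w * σ j * swap z w) a.1 ^ a.2) y = (σ a.1 ^ a.2) y := by
      by_cases hj : a.1 = j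
      · subst hj
        rw [Function.update_self, swap_conj_zpow]
        simp only [Perm.mul_apply]
        rw [swap_apply_of_ne_of_ne h0.1 h0.2, swap_apply_of_ne_of_ne h1.1 h1.2]
      · rw [Function.update_of_ne hj]
    simp only [ev, Perm.mul_apply]
    rw [hs]
    apply ih
    intro i hi
    have := h (i + 1) (by simpa using hi)
    simpa [ev] using this

open Classical in
noncomputable def W {α : Type*} (σ : J → Perm α) (M : List (J × ℤ)) (z : α) : Finset α :=
  (Finset.range (M.length + 1)).image (fun i => ev σ (M.take i) z)

theorem W_card {α : Type*} (σ : J → Perm α) (M : List (J × ℤ)) (z : α) :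
    (W σ M z).card ≤ M.length + 1 := by
  classical
  unfold W
  exact Finset.card_image_le.trans (by simp)

theorem mem_W {α : Type*} {σ : J → Perm α} {M : List (J × ℤ)} {z w : α} (h : w ∈ W σ M z) :
    ∃ i ∈ Finset.range (M.length + 1), ev σ (M.take i) z = w := by
  simpa only [W, Finset.mem_image] using h

theorem not_mem_W {α : Type*} {σ : J → Perm α} {M : List (J × ℤ)} {z w : α} :
    w ∉ W σ M z ↔ ∀ i ≤ M.length, ev σ (M.take i) z ≠ w := by
  simp [W]

open Classical in
noncomputable def Fgood (a : J × ℤ) (M : List (J × ℤ)) (n : ℕ) (σ : T pp n) : Finset (Fin n) :=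
  Finset.univ.filter fun z => (σ.1 a.1 ^ a.2) (ev σ.1 M z) = z ∧
    ∀ i, 1 ≤ i → i ≤ M.length → ev σ.1 (M.take i) z ≠ z

theorem swap_step {α : Type*} [DecidableEq α] [DecidableEq J] (σ : J → Perm α) (b : J × ℤ)
    (M : List (J × ℤ)) (z w : α)
    (hw : ∀ i, 1 ≤ i → i ≤ (b :: M).length → ev σ ((b :: M).take i) w ≠ w)
    (hzw : ∀ i ≤ (b :: M).length, ev σ ((b :: M).take i) w ≠ z) :
    ev (Function.update σ b.1 (swap z w * σ b.1 * swap z w)) (b :: M) z = ev σ (b :: M) w := by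
  simp only [ev, Perm.mul_apply]
  have h1 := hw 1 le_rfl (by simp)
  have h2 := hzw 1 (by simp)
  simp only [List.take_zero, ev, Perm.one_apply, List.take_succ_cons, Perm.mul_apply] at h1 h2
  have : (Function.update σ b.1 (swap z w * σ b.1 * swap z w) b.1 ^ b.2) z = (σ b.1 ^ b.2) w := by
    rw [Function.update_self, swap_conj_zpow]
    simp only [Perm.mul_apply, swap_apply_left]
    rw [swap_apply_of_ne_of_ne h2 h1]
  rw [this]
  apply ev_update_eq
  intro i hi
  have h3 := hw (i + 1) (by omega) (by simpa using hi)
  have h4 := hzw (i + 1) (by simpa using hi)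
  simp only [List.take_succ_cons, ev, Perm.mul_apply] at h3 h4
  exact ⟨h4, h3⟩

open Classical in
theorem small_good (a b : J × ℤ) (M : List (J × ℤ)) (hab : a.1 ≠ b.1) :
    Small (pp := pp) (Fgood a (b :: M)) := by
  refine small_of_pairs _ (fun n σ z w => z ∈ W σ.1 (b :: M) w ∨ w ∈ W σ.1 (b :: M) z)
    (2 * ((b :: M).length + 1)) ?_
    (fun n σ z w τ => τ.1 = Function.update σ.1 b.1 (swap z w * σ.1 b.1 * swap z w) ∧
      (τ.1 a.1 ^ a.2) (ev τ.1 (b :: M) z) = w) ?_ ?_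
  · intro n σ z hz
    refine ⟨((Finset.range ((b :: M).length + 1)).image
      (fun i => (ev σ.1 ((b :: M).take i))⁻¹ z)) ∪ W σ.1 (b :: M) z, ?_, ?_⟩
    · refine (Finset.card_union_le _ _).trans ?_
      have h1 : ((Finset.range ((b :: M).length + 1)).image
        (fun i => (ev σ.1 ((b :: M).take i))⁻¹ z)).card ≤ (b :: M).length + 1 :=
        Finset.card_image_le.trans (by simp)
      have h2 := W_card σ.1 (b :: M) z
      omega
    · intro w _ hw
      rw [Finset.mem_union]
      rcases hw with h | h
      · left
        obtain ⟨i, hi, rfl⟩ := mem_W h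
        rw [Finset.mem_image]
        exact ⟨i, hi, by simp⟩
      · exact Or.inr h
  · intro n σ z w hz hw hbad
    push Not at hbad
    rw [not_mem_W, not_mem_W] at hbad
    simp only [Fgood, Finset.mem_filter, Finset.mem_univ, true_and] at hz hw
    have hst := swap_step σ.1 b M z w hw.2 hbad.1
    have hend : (Function.update σ.1 b.1 (swap z w * σ.1 b.1 * swap z w) a.1 ^ a.2)
        (ev (Function.update σ.1 b.1 (swap z w * σ.1 b.1 * swap z w)) (b :: M) z) = w := by
      rw [hst, Function.update_of_ne hab]; exact hw.1
    refine ⟨⟨Function.update σ.1 b.1 (swap z w * σ.1 b.1 * swap z w), ?_, ?_⟩, rfl, hend⟩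
    · intro j
      by_cases hj : j = b.1
      · subst hj
        rw [Function.update_self, ← zpow_natCast, swap_conj_zpow, zpow_natCast, σ.2.1]; simp
      · rw [Function.update_of_ne hj]; exact σ.2.1 j
    · intro P hP
      have hzw : P z ↔ P w := by
        conv_rhs => rw [← hend]
        rw [inv_zpow _ P (hP _), inv_ev _ P hP]
      have hsw : ∀ y, P (swap z w y) ↔ P y := by
        intro y
        by_cases h1 : y = z
        · subst h1; rw [swap_apply_left, hzw]
        by_cases h2 : y = w
        · subst h2; rw [swap_apply_right, hzw]
        rw [swap_apply_of_ne_of_ne h1 h2]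
      refine σ.2.2 P ?_
      intro j x
      by_cases hj : j = b.1
      · subst hj
        have := hP b.1 (swap z w x)
        rw [Function.update_self] at this
        simp only [Perm.mul_apply, swap_apply_self] at this
        rwa [hsw, hsw] at this
      · have := hP j x
        rwa [Function.update_of_ne hj] at this
  · rintro n σ σ' z w w' τ ⟨h1, h2⟩ ⟨h3, h4⟩
    have hw : w = w' := h2.symm.trans h4
    subst hw
    refine ⟨Subtype.ext ?_, rfl⟩
    rw [h1] at h3
    funext j
    have := congrFun h3 j
    by_cases hj : j = b.1
    · subst hj
      simpa using this
    · simpa [Function.update_of_ne hj] using this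

theorem zred {α : Type*} (s : Perm α) (d : ℕ) (hd : 0 < d) (x : α) (hx : (s ^ d) x = x) (t : ℤ) :
    ∃ u : ℕ, 0 < u ∧ u ≤ d ∧ (s ^ t) x = (s ^ u) x := by
  have h1 : ∀ q : ℤ, (s ^ ((d : ℤ) * q)) x = x := by
    intro q
    rw [zpow_mul, zpow_natCast]
    exact Perm.zpow_apply_eq_self_of_apply_eq_self hx q
  have hd' : (d : ℤ) ≠ 0 := by omega
  have h2 : (s ^ t) x = (s ^ (t % d)) x := by
    conv_lhs => rw [← Int.emod_add_mul_ediv t d, zpow_add, Perm.mul_apply, h1]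
  have h3 := Int.emod_nonneg t hd'
  have h4 := Int.emod_lt_of_pos t (by omega : (0 : ℤ) < d)
  by_cases h0 : t % d = 0
  · exact ⟨d, hd, le_rfl, by rw [h2, h0, hx]; simp⟩
  · refine ⟨(t % d).toNat, by omega, by omega, ?_⟩
    rw [h2, ← zpow_natCast, Int.toNat_of_nonneg h3]

section merge
variable {α : Type*} (s : Perm α) (d k : ℕ) [NeZero k] (X : ZMod k ↪ α)

noncomputable def mg : Perm α := s * (Equiv.addRight (1 : ZMod k)).viaEmbedding X

variable (hd : 0 < d) (hX1 : ∀ i, (s ^ d) (X i) = X i)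
  (hX2 : ∀ i t, 0 < t → t < d → (s ^ t) (X i) ≠ X i)
  (hX3 : ∀ i i', s.SameCycle (X i) (X i') → i = i')

theorem mg_X (i : ZMod k) : mg s k X (X i) = s (X (i + 1)) := by
  simp [mg, Perm.viaEmbedding_apply]

theorem mg_not (y : α) (h : ∀ i, X i ≠ y) : mg s k X y = s y := by
  rw [mg, Perm.mul_apply, Perm.viaEmbedding_apply_of_notMem]
  rintro ⟨i, hi⟩
  exact h i hi

include hX2 hX3 in
theorem mg_pow (i : ZMod k) (t : ℕ) (ht : t + 1 ≤ d) :
    (mg s k X ^ (t + 1)) (X i) = (s ^ (t + 1)) (X (i + 1)) := by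
  induction t with
  | zero => simp [mg_X]
  | succ t ih =>
    rw [pow_succ', Perm.mul_apply, ih (by omega), mg_not, ← Perm.mul_apply, ← pow_succ']
    intro i' hi'
    have : i + 1 = i' := hX3 _ _ ⟨(t + 1 : ℕ), by rw [zpow_natCast]; exact hi'.symm⟩
    subst this
    exact hX2 _ (t + 1) (by omega) (by omega) hi'.symm

include hd hX1 hX2 hX3 in
theorem mg_pow_d (i : ZMod k) : (mg s k X ^ d) (X i) = X (i + 1) := by
  obtain ⟨t, rfl⟩ : ∃ t, d = t + 1 := ⟨d - 1, by omega⟩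
  rw [mg_pow s (t + 1) k X hX2 hX3 i t le_rfl, hX1]

theorem iter_X (f : Perm α) (Y : ZMod k → α) (hf : ∀ i, (f ^ d) (Y i) = Y (i + 1)) (i : ZMod k)
    (m : ℕ) : (f ^ (d * m)) (Y i) = Y (i + m) := by
  induction m with
  | zero => simp
  | succ m ih =>
    rw [mul_add, mul_one, add_comm, pow_add, Perm.mul_apply, ih, hf]
    push_cast; rw [add_assoc]

include hd hX1 hX2 hX3 in
theorem mg_pow_eq_one (q : ℕ) (hq : d * k ∣ q) (hs : s ^ q = 1) : mg s k X ^ q = 1 := by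
  ext y
  rw [Perm.one_apply]
  by_cases hy : ∃ i, ∃ t : ℤ, (s ^ t) (X i) = y
  · obtain ⟨i, t, rfl⟩ := hy
    obtain ⟨u, hu0, hu, he⟩ := zred s d hd (X i) (hX1 i) t
    obtain ⟨v, rfl⟩ : ∃ v, u = v + 1 := ⟨u - 1, by omega⟩
    have h1 := mg_pow s d k X hX2 hX3 (i - 1) v hu
    rw [sub_add_cancel] at h1
    rw [he, ← h1, ← Perm.mul_apply, (Commute.pow_pow_self (mg s k X) q (v + 1)).eq, Perm.mul_apply]
    congr 1
    obtain ⟨c, rfl⟩ := hq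
    rw [mul_assoc, iter_X d k _ X (mg_pow_d s d k X hd hX1 hX2 hX3)]
    simp
  · push Not at hy
    have : ∀ t : ℕ, (mg s k X ^ t) y = (s ^ t) y := by
      intro t
      induction t with
      | zero => simp
      | succ t ih =>
        rw [pow_succ', Perm.mul_apply, ih, mg_not, ← Perm.mul_apply, ← pow_succ']
        intro i hi
        apply hy i (-(t : ℤ))
        rw [hi, zpow_neg, zpow_natCast]; simp
    rw [this, hs, Perm.one_apply]

include hd hX1 hX2 hX3 in
theorem mg_inv (P : α → Prop) (hP : ∀ y, P (mg s k X y) ↔ P y) (y : α) : P (s y) ↔ P y := by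
  have h1 : ∀ i, P (X (i + 1)) ↔ P (X i) := by
    intro i
    rw [← mg_pow_d s d k X hd hX1 hX2 hX3 i, ← zpow_natCast, inv_zpow _ P hP]
  by_cases hy : ∃ i, X i = y
  · obtain ⟨i, rfl⟩ := hy
    have := hP (X (i - 1))
    rw [mg_X, sub_add_cancel] at this
    rw [this, ← h1, sub_add_cancel]
  · push Not at hy
    rw [← mg_not s k X y hy, hP]

end merge

theorem exists_emb {ι Q : Type*} (s : Finset Q) [Fintype ι] (hs : Fintype.card ι ≤ s.card)
    (i0 i1 : ι) (hi : i0 ≠ i1) (q0 q1 : Q) (h0 : q0 ∈ s) (h1 : q1 ∈ s) (hq : q0 ≠ q1) :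
    ∃ f : ι → Q, Function.Injective f ∧ (∀ i, f i ∈ s) ∧ f i0 = q0 ∧ f i1 = q1 := by
  classical
  obtain ⟨e⟩ : Nonempty (ι ↪ s) := Function.Embedding.nonempty_of_card_le (by simpa using hs)
  let a : s := ⟨q0, h0⟩
  let b : s := ⟨q1, h1⟩
  have hab : a ≠ b := fun h => hq (congrArg Subtype.val h)
  let e1 : ι ↪ s := e.trans (swap (e i0) a).toEmbedding
  have he1 : e1 i0 = a := by simp [e1]
  let e2 : ι ↪ s := e1.trans (swap (e1 i1) b).toEmbedding
  have he2 : e2 i1 = b := by simp [e2]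
  have he3 : e2 i0 = a := by
    have : e1 i0 ≠ e1 i1 := fun h => hi (e1.injective h)
    simp only [e2, Function.Embedding.trans_apply, Equiv.coe_toEmbedding]
    rw [swap_apply_of_ne_of_ne this (by rw [he1]; exact hab), he1]
  refine ⟨fun i => (e2 i).1, fun i i' h => e2.injective (Subtype.ext h), fun i => (e2 i).2, ?_, ?_⟩
  · simp [he3, a]
  · simp [he2, b]

theorem exists_X {α : Type*} [Fintype α] (s : Perm α) (d k : ℕ) (hd : 0 < d) [NeZero k] (hk : 2 ≤ k)
    (F : Finset α) (hF : ∀ x ∈ F, (s ^ d) x = x) (hcard : d * k ≤ F.card) (z w : α)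
    (hz : z ∈ F) (hw : w ∈ F) (hzw : ¬ s.SameCycle z w) :
    ∃ X : ZMod k ↪ α, X 0 = z ∧ X 1 = w ∧ (∀ i, X i ∈ F) ∧
      ∀ i i', s.SameCycle (X i) (X i') → i = i' := by
  classical
  let mk : α → Quotient (Perm.SameCycle.setoid s) := Quotient.mk _
  have hmk : ∀ x y, mk x = mk y ↔ s.SameCycle x y := fun x y => Quotient.eq
  have h1 : F.card ≤ d * (F.image mk).card := by
    refine Finset.card_le_mul_card_image F d ?_
    intro q hq
    obtain ⟨x, hx, rfl⟩ := Finset.mem_image.1 hq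
    refine (Finset.card_le_card (t := (Finset.Icc 1 d).image fun u => (s ^ u) x) ?_).trans
      (Finset.card_image_le.trans (by simp))
    intro y hy
    rw [Finset.mem_filter] at hy
    obtain ⟨t, ht⟩ := (hmk _ _).1 hy.2.symm
    obtain ⟨u, hu0, hu, he⟩ := zred s d hd x (hF x hx) t
    rw [Finset.mem_image]
    exact ⟨u, Finset.mem_Icc.2 ⟨hu0, hu⟩, by rw [← he, ht]⟩
  have h2 : k ≤ (F.image mk).card := Nat.le_of_mul_le_mul_left (hcard.trans h1) hd
  have h01 : (0 : ZMod k) ≠ 1 := by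
    have : Fact (1 < k) := ⟨hk⟩
    exact zero_ne_one
  obtain ⟨f, hf, hfs, hf0, hf1⟩ := exists_emb (ι := ZMod k) (F.image mk) (by simpa [ZMod.card] using h2)
    0 1 h01 (mk z) (mk w) (Finset.mem_image_of_mem _ hz) (Finset.mem_image_of_mem _ hw)
    (by rw [Ne, hmk]; exact hzw)
  have h3 : ∀ i, ∃ x ∈ F, mk x = f i := fun i => Finset.mem_image.1 (hfs i)
  choose Y hY hY' using h3
  let X := Function.update (Function.update Y 0 z) 1 w
  have hX0 : X 0 = z := by simp [X, Function.update_of_ne h01]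
  have hX1 : X 1 = w := by simp [X]
  have hX' : ∀ i, i ≠ 0 → i ≠ 1 → X i = Y i := by
    intro i h0 h1; simp [X, Function.update_of_ne h0, Function.update_of_ne h1]
  have hXF : ∀ i, X i ∈ F ∧ mk (X i) = f i := by
    intro i
    by_cases h0 : i = 0
    · subst h0; rw [hX0]; exact ⟨hz, hf0.symm⟩
    by_cases h1 : i = 1
    · subst h1; rw [hX1]; exact ⟨hw, hf1.symm⟩
    rw [hX' i h0 h1]; exact ⟨hY i, hY' i⟩
  have hXs : ∀ i i', s.SameCycle (X i) (X i') → i = i' := by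
    intro i i' h
    apply hf
    rw [← (hXF i).2, ← (hXF i').2, hmk]; exact h
  exact ⟨⟨X, fun i i' h => hXs i i' (by rw [h])⟩, hX0, hX1, fun i => (hXF i).1, hXs⟩

open Classical in
noncomputable def Fcyc (j : J) (d : ℕ) (n : ℕ) (σ : T pp n) : Finset (Fin n) :=
  Finset.univ.filter fun x => (σ.1 j ^ d) x = x ∧ ∀ t, 0 < t → t < d → (σ.1 j ^ t) x ≠ x

open Classical in
theorem small_cyc (j : J) (d k : ℕ) (hd : 0 < d) (hk : 2 ≤ k) (hdk : d * k ∣ pp j) :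
    Small (pp := pp) (Fcyc j d) := by
  have : NeZero k := ⟨by omega⟩
  refine small_of_pairs _ (fun n σ z w => (Fcyc j d n σ).card < d * k ∨ (σ.1 j).SameCycle z w)
    (d * k + d) ?_
    (fun n σ z w τ => ∃ X : ZMod k ↪ Fin n, X 0 = z ∧ X 1 = w ∧
      τ.1 = Function.update σ.1 j (mg (σ.1 j) k X) ∧ ∀ i, (τ.1 j ^ d) (X i) = X (i + 1)) ?_ ?_
  · intro n σ z hz
    by_cases hc : (Fcyc j d n σ).card < d * k
    · exact ⟨Fcyc j d n σ, by omega, fun w hw _ => hw⟩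
    · refine ⟨(Finset.Icc 1 d).image fun u => (σ.1 j ^ u) z,
        (Finset.card_image_le.trans (by simp)), ?_⟩
      intro w hw hb
      obtain ⟨t, ht⟩ := hb.resolve_left hc
      simp only [Fcyc, Finset.mem_filter, Finset.mem_univ, true_and] at hz
      obtain ⟨u, hu0, hu, he⟩ := zred (σ.1 j) d hd z hz.1 t
      rw [Finset.mem_image]
      exact ⟨u, Finset.mem_Icc.2 ⟨hu0, hu⟩, by rw [← he, ht]⟩
  · intro n σ z w hz hw hbad
    push Not at hbad
    obtain ⟨X, hX0, hX1, hXF, hXs⟩ := exists_X (σ.1 j) d k hd hk (Fcyc j d n σ)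
      (fun x hx => by
        simp only [Fcyc, Finset.mem_filter, Finset.mem_univ, true_and] at hx; exact hx.1)
      hbad.1 z w hz hw hbad.2
    simp only [Fcyc, Finset.mem_filter, Finset.mem_univ, true_and] at hXF
    have ha := fun i => (hXF i).1
    have hb := fun i => (hXF i).2
    refine ⟨⟨Function.update σ.1 j (mg (σ.1 j) k X), ?_, ?_⟩, X, hX0, hX1, rfl, ?_⟩
    · intro j'
      by_cases hj : j' = j
      · subst hj
        rw [Function.update_self]
        exact mg_pow_eq_one _ d k X hd ha hb hXs _ hdk (σ.2.1 _)
      · rw [Function.update_of_ne hj]; exact σ.2.1 j'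
    · intro P hP
      refine σ.2.2 P ?_
      intro j' x
      by_cases hj : j' = j
      · subst hj
        refine mg_inv _ d k X hd ha hb hXs P (fun y => ?_) x
        have := hP j' y
        rwa [Function.update_self] at this
      · have := hP j' x
        rwa [Function.update_of_ne hj] at this
    · intro i
      simp only [Function.update_self]
      exact mg_pow_d _ d k X hd ha hb hXs i
  · rintro n σ σ' z w w' τ ⟨X, hX0, hX1, hX2, hX3⟩ ⟨Y, hY0, hY1, hY2, hY3⟩
    have hXY : X = Y := by
      ext i : 1
      have h1 := iter_X d k (τ.1 j) X hX3 0 i.val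
      have h2 := iter_X d k (τ.1 j) Y hY3 0 i.val
      rw [hX0] at h1
      rw [hY0, h1] at h2
      simpa using h2
    subst hXY
    refine ⟨Subtype.ext ?_, hX1.symm.trans hY1⟩
    rw [hX2] at hY2
    funext j'
    have := congrFun hY2 j'
    by_cases hj : j' = j
    · subst hj
      simpa [mg] using this
    · simpa [Function.update_of_ne hj] using this

open Classical in
noncomputable def Ffix (L : List (J × ℤ)) (n : ℕ) (σ : T pp n) : Finset (Fin n) :=
  Finset.univ.filter fun x => ev σ.1 L x = x

theorem small_single (a : J × ℤ) (ha : ¬ (pp a.1 : ℤ) ∣ a.2) : Small (pp := pp) (Ffix [a]) := by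
  classical
  have he : a.2 ≠ 0 := fun h => ha (by rw [h]; exact dvd_zero _)
  refine Small.of_le ((Finset.Icc 1 a.2.natAbs).filter fun d => d ∣ pp a.1 ∧ d ≠ pp a.1) _
    (fun d => Fcyc a.1 d) ?_ ?_
  · intro d hd
    simp only [Finset.mem_filter, Finset.mem_Icc] at hd
    obtain ⟨⟨h1, h2⟩, ⟨c, hc⟩, h4⟩ := hd
    by_cases h0 : pp a.1 = 0
    · exact small_cyc a.1 d 2 h1 le_rfl (by rw [h0]; exact dvd_zero _)
    · refine small_cyc a.1 d c h1 ?_ (by rw [hc])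
      rcases c with _ | _ | c
      · simp at hc; omega
      · simp at hc; omega
      · omega
  · intro n σ
    refine (Finset.card_le_card (t := ((Finset.Icc 1 a.2.natAbs).filter
      fun d => d ∣ pp a.1 ∧ d ≠ pp a.1).biUnion fun d => Fcyc a.1 d n σ) ?_).trans
      Finset.card_biUnion_le
    intro x hx
    simp only [Ffix, ev, Finset.mem_filter, Finset.mem_univ, true_and, one_mul] at hx
    have hx' : (σ.1 a.1 ^ a.2.natAbs) x = x := by
      rcases Int.natAbs_eq a.2 with h | h
      · rw [h, zpow_natCast] at hx; exact hx
      · rw [h, zpow_neg, zpow_natCast, Perm.inv_eq_iff_eq] at hx; exact hx.symm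
    have per : ∀ t, (σ.1 a.1 ^ t) x = x ↔ Function.minimalPeriod (σ.1 a.1) x ∣ t := by
      intro t
      rw [← Function.isPeriodicPt_iff_minimalPeriod_dvd, Function.IsPeriodicPt, Function.IsFixedPt,
        Perm.iterate_eq_pow]
    have hpos : 0 < Function.minimalPeriod (σ.1 a.1) x := by
      rcases Nat.eq_zero_or_pos (Function.minimalPeriod (σ.1 a.1) x) with h | h
      · have := (per _).1 hx'
        rw [h, zero_dvd_iff] at this; omega
      · exact h
    have hdv : Function.minimalPeriod (σ.1 a.1) x ∣ a.2.natAbs := (per _).1 hx'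
    simp only [Finset.mem_biUnion, Finset.mem_filter, Finset.mem_Icc, Fcyc, Finset.mem_univ,
      true_and]
    refine ⟨Function.minimalPeriod (σ.1 a.1) x, ⟨⟨hpos, Nat.le_of_dvd (by omega) hdv⟩, ?_, ?_⟩,
      ?_, ?_⟩
    · rw [← per, σ.2.1]; rfl
    · intro h
      rw [h] at hdv
      exact ha (Int.natCast_dvd.2 hdv)
    · rw [per]
    · intro t h0 ht h
      rw [per] at h
      exact absurd (Nat.le_of_dvd h0 h) (by omega)

def Red (pp : J → ℕ) (L : List (J × ℤ)) : Prop :=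
  (∀ a ∈ L, ¬ (pp a.1 : ℤ) ∣ a.2) ∧ L.IsChain (fun a b => a.1 ≠ b.1)

theorem small_fix (L : List (J × ℤ)) (hL : Red pp L) (hne : L ≠ []) : Small (pp := pp) (Ffix L) := by
  classical
  induction hl : L.length using Nat.strong_induction_on generalizing L with
  | _ l ih =>
  match L, hne with
  | [a], _ => exact small_single a (hL.1 a (by simp))
  | a :: b :: M, _ =>
    have hMred : Red pp (b :: M) := ⟨fun x hx => hL.1 x (by simp [hx]), hL.2.tail⟩
    have hab : a.1 ≠ b.1 := by
      have := hL.2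
      rw [List.isChain_cons_cons] at this
      exact this.1
    refine Small.of_le (Finset.range (M.length + 3)) _
      (fun i => if i = 0 then Fgood a (b :: M) else
        if i = M.length + 2 then Ffix [a] else Ffix ((b :: M).take i)) ?_ ?_
    · intro i hi
      rw [Finset.mem_range] at hi
      split_ifs with h1 h2
      · exact small_good a b M hab
      · exact small_single a (hL.1 a (by simp))
      · refine ih ((b :: M).take i).length ?_ _ ?_ ?_ rfl
        · rw [← hl]; simp only [List.length_take, List.length_cons]; omega
        · exact ⟨fun x hx => hMred.1 x (List.mem_of_mem_take hx), hMred.2.take i⟩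
        · intro h
          have := congrArg List.length h
          simp at this; omega
    · intro n σ
      have hcov : Ffix (a :: b :: M) n σ ⊆ (Finset.range (M.length + 3)).biUnion fun i =>
          ((if i = 0 then Fgood a (b :: M) else
        if i = M.length + 2 then Ffix [a] else Ffix ((b :: M).take i) :
          ∀ n, T pp n → Finset (Fin n)) n σ).map (σ.1 a.1 ^ a.2)⁻¹.toEmbedding := by
        intro x hx
        rw [Finset.mem_biUnion]
        simp only [Ffix, Finset.mem_filter, Finset.mem_univ, true_and] at hx
        rw [ev, Perm.mul_apply] at hx
        by_cases hg : ∀ i, 1 ≤ i → i ≤ (b :: M).length →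
            ev σ.1 ((b :: M).take i) ((σ.1 a.1 ^ a.2) x) ≠ (σ.1 a.1 ^ a.2) x
        · refine ⟨0, by simp, ?_⟩
          rw [Finset.mem_map]
          refine ⟨(σ.1 a.1 ^ a.2) x, ?_, by simp⟩
          simp only [if_true, Fgood, Finset.mem_filter, Finset.mem_univ, true_and]
          exact ⟨by rw [hx], hg⟩
        · push Not at hg
          obtain ⟨i, h1, h2, h3⟩ := hg
          simp only [List.length_cons] at h2
          refine ⟨i, by rw [Finset.mem_range]; omega, ?_⟩
          rw [if_neg (by omega), if_neg (by omega), Finset.mem_map]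
          exact ⟨(σ.1 a.1 ^ a.2) x, by simpa [Ffix] using h3, by simp⟩
      refine (Finset.card_le_card hcov).trans (Finset.card_biUnion_le.trans ?_)
      simp

section group
variable {G : Type} [Group G] (s : J → G)

theorem exists_list (hgen : Subgroup.closure (Set.range s) = ⊤) (g : G) : ∃ L, ev s L = g := by
  have hg : g ∈ Subgroup.closure (Set.range s) := by rw [hgen]; trivial
  have hinv : ∀ L, ∃ L', ev s L' = (ev s L)⁻¹ := by
    intro L
    induction L with
    | nil => exact ⟨[], by simp [ev]⟩
    | cons a M ih =>
      obtain ⟨L', h⟩ := ih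
      exact ⟨L' ++ [(a.1, -a.2)], by rw [ev_append, h]; simp [ev]⟩
  induction hg using Subgroup.closure_induction with
  | mem x hx => obtain ⟨j, rfl⟩ := hx; exact ⟨[(j, 1)], by simp [ev]⟩
  | one => exact ⟨[], rfl⟩
  | mul x y _ _ hx hy =>
    obtain ⟨A, rfl⟩ := hx
    obtain ⟨B, rfl⟩ := hy
    exact ⟨B ++ A, ev_append _ _ _⟩
  | inv x _ hx => obtain ⟨A, rfl⟩ := hx; exact hinv A

theorem exists_red (hgen : Subgroup.closure (Set.range s) = ⊤) (hs : ∀ j, s j ^ pp j = 1) (g : G)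
    (hg : g ≠ 1) : ∃ L, Red pp L ∧ L ≠ [] ∧ ev s L = g := by
  classical
  have hex : ∃ l, ∃ L, ev s L = g ∧ L.length = l := by
    obtain ⟨L, hL⟩ := exists_list s hgen g
    exact ⟨_, L, hL, rfl⟩
  obtain ⟨L, hL, hlen⟩ := Nat.find_spec hex
  have hmin : ∀ L', ev s L' = g → L.length ≤ L'.length := by
    intro L' h'
    rw [hlen]
    exact Nat.find_min' hex ⟨L', h', rfl⟩
  refine ⟨L, ⟨?_, ?_⟩, ?_, hL⟩
  · rintro a ha ⟨c, hc⟩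
    obtain ⟨A, B, rfl⟩ := List.append_of_mem ha
    have := hmin (A ++ B) (by
      rw [← hL, ev_append, ev_append, ev, hc, zpow_mul, zpow_natCast, hs]; simp)
    simp at this
  · rw [List.isChain_iff_forall_rel_of_append_cons_cons]
    intro a b A B hAB hab
    subst hAB
    have := hmin (A ++ (a.1, a.2 + b.2) :: B) (by
      rw [← hL, ev_append, ev_append, ev, ev, ev, ← hab]
      simp only [add_comm a.2, zpow_add, mul_assoc])
    simp at this
  · rintro rfl
    exact hg hL.symm

noncomputable def phi {n : ℕ} (H : Subgroup G) (e : G ⧸ H ≃ Fin n) : G →* Perm (Fin n) where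
  toFun g := e.permCongr (MulAction.toPerm g)
  map_one' := by ext; simp
  map_mul' a b := by ext; simp [mul_smul]

theorem phi_apply {n : ℕ} (H : Subgroup G) (e : G ⧸ H ≃ Fin n) (g : G) (q : G ⧸ H) :
    phi H e g (e q) = e (g • q) := by
  simp [phi]

theorem hom_inv (hgen : Subgroup.closure (Set.range s) = ⊤) {α : Type*} (φ : G →* Perm α)
    (P : α → Prop) (hP : ∀ j x, P (φ (s j) x) ↔ P x) (g : G) (x : α) : P (φ g x) ↔ P x := by
  obtain ⟨L, rfl⟩ := exists_list s hgen g
  rw [ev_map]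
  exact inv_ev _ P hP L x

theorem hom_eq (hgen : Subgroup.closure (Set.range s) = ⊤) {α : Type*} (φ ψ : G →* Perm α)
    (h : ∀ j, φ (s j) = ψ (s j)) (g : G) : φ g = ψ g := by
  obtain ⟨L, rfl⟩ := exists_list s hgen g
  rw [ev_map, ev_map]
  congr 1
  funext j; exact h j

abbrev SS (G : Type) [Group G] (n : ℕ) : Type :=
  Σ H : {H : Subgroup G // H.index = n}, (G ⧸ H.1 ≃ Fin n)

noncomputable def toT (hgen : Subgroup.closure (Set.range s) = ⊤) (hs : ∀ j, s j ^ pp j = 1) (n : ℕ)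
    (q : SS G n) : T pp n :=
  ⟨fun j => phi q.1.1 q.2 (s j), fun j => by rw [← map_pow, hs, map_one], by
    intro P hP x y hx
    obtain ⟨a, rfl⟩ := q.2.surjective x
    obtain ⟨b, rfl⟩ := q.2.surjective y
    induction a using QuotientGroup.induction_on with
    | H a =>
    induction b using QuotientGroup.induction_on with
    | H b =>
    have := hom_inv s hgen (phi q.1.1 q.2) P hP (b * a⁻¹) (q.2 a)
    rw [phi_apply] at this
    have h2 : (b * a⁻¹) • (a : G ⧸ q.1.1) = (b : G ⧸ q.1.1) := by
      rw [MulAction.Quotient.smul_coe]; simp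
    rw [h2] at this
    exact this.2 hx⟩

theorem toT_bij (hgen : Subgroup.closure (Set.range s) = ⊤) (hs : ∀ j, s j ^ pp j = 1)
    (n : ℕ) (hU : ∀ σ : J → Perm (Fin n), (∀ j, σ j ^ pp j = 1) →
      ∃ φ : G →* Perm (Fin n), ∀ j, φ (s j) = σ j) :
    Function.Bijective (fun q : SS G n =>
      (toT s hgen hs n q, q.2 ((1 : G) : G ⧸ q.1.1))) := by
  constructor
  · rintro ⟨⟨H, hH⟩, e⟩ ⟨⟨H', hH'⟩, e'⟩ heq
    simp only [Prod.mk.injEq] at heq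
    obtain ⟨h1, h2⟩ := heq
    have h3 : ∀ g, phi H e g = phi H' e' g := by
      apply hom_eq s hgen
      intro j
      exact congrFun (congrArg Subtype.val h1) j
    have h4 : ∀ g : G, e (g : G ⧸ H) = e' (g : G ⧸ H') := by
      intro g
      have a1 := phi_apply H e g ((1 : G) : G ⧸ H)
      have a2 := phi_apply H' e' g ((1 : G) : G ⧸ H')
      rw [MulAction.Quotient.smul_coe, smul_eq_mul, mul_one] at a1 a2
      rw [← a1, ← a2, h3, h2]
    have hHH : H = H' := by
      ext g
      have a1 := h4 g
      constructor
      · intro hg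
        have : (g : G ⧸ H) = ((1 : G) : G ⧸ H) := by
          rw [QuotientGroup.eq]; simpa using hg
        rw [this, h2] at a1
        have := e'.injective a1
        rw [QuotientGroup.eq] at this; simpa using this
      · intro hg
        have : (g : G ⧸ H') = ((1 : G) : G ⧸ H') := by
          rw [QuotientGroup.eq]; simpa using hg
        rw [this, ← h2] at a1
        have := e.injective a1
        rw [QuotientGroup.eq] at this; simpa using this
    subst hHH
    have : e = e' := by
      ext q : 1
      induction q using QuotientGroup.induction_on with
      | H g => exact h4 g
    subst this
    rfl
  · rintro ⟨σ, x⟩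
    obtain ⟨φ, hφ⟩ := hU σ.1 σ.2.1
    let H : Subgroup G := (MulAction.stabilizer (Perm (Fin n)) x).comap φ
    have hmem : ∀ a b : G, a⁻¹ * b ∈ H ↔ φ a x = φ b x := by
      intro a b
      simp only [H, Subgroup.mem_comap, MulAction.mem_stabilizer_iff, map_mul, map_inv,
        Perm.smul_def, Perm.mul_apply, Perm.inv_eq_iff_eq]
      exact eq_comm
    let f : G ⧸ H → Fin n := Quotient.lift (fun g : G => φ g x) (by
      intro a b hab
      exact (hmem a b).1 (QuotientGroup.leftRel_apply.1 hab))
    have hf : ∀ g : G, f (g : G ⧸ H) = φ g x := fun g => rfl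
    have hbij : Function.Bijective f := by
      constructor
      · intro a b
        induction a using QuotientGroup.induction_on with
        | H a =>
        induction b using QuotientGroup.induction_on with
        | H b =>
        intro hab
        rw [hf, hf] at hab
        rw [QuotientGroup.eq, hmem, hab]
      · intro y
        have := σ.2.2 (fun y => ∃ g, φ g x = y) (by
          intro j y
          rw [← hφ]
          constructor
          · rintro ⟨g, hg⟩
            exact ⟨(s j)⁻¹ * g, by rw [map_mul, Perm.mul_apply, hg, map_inv]; simp⟩
          · rintro ⟨g, rfl⟩
            exact ⟨s j * g, by rw [map_mul, Perm.mul_apply]⟩) x y ⟨1, by simp⟩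
        obtain ⟨g, hg⟩ := this
        exact ⟨(g : G ⧸ H), hg⟩
    let e := Equiv.ofBijective f hbij
    have hidx : H.index = n := by
      rw [Subgroup.index, Nat.card_congr e]; simp
    refine ⟨⟨⟨H, hidx⟩, e⟩, ?_⟩
    rw [Prod.mk.injEq]
    constructor
    · apply Subtype.ext
      funext j
      rw [← hφ]
      ext y : 1
      obtain ⟨q, rfl⟩ := e.surjective y
      change phi H e (s j) (e q) = _
      rw [phi_apply]
      induction q using QuotientGroup.induction_on with
      | H g =>
      rw [MulAction.Quotient.smul_coe]
      change φ (s j * g) x = φ (s j) (φ g x)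
      rw [map_mul, Perm.mul_apply]
    · change φ 1 x = x
      simp

theorem fix_eq (hgen : Subgroup.closure (Set.range s) = ⊤) (hs : ∀ j, s j ^ pp j = 1) (n : ℕ)
    (q : SS G n) (L : List (J × ℤ)) :
    fixedCosetCount (ev s L) q.1.1 = (Ffix L n (toT s hgen hs n q)).card := by
  classical
  have h1 : (Ffix L n (toT s hgen hs n q)).card =
      Nat.card {y : Fin n // phi q.1.1 q.2 (ev s L) y = y} := by
    rw [Nat.card_eq_fintype_card, Fintype.card_subtype, ev_map]
    simp only [Ffix]
    congr
  rw [h1, fixedCosetCount]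
  refine Nat.card_congr (q.2.subtypeEquiv fun x => ?_)
  rw [phi_apply]
  exact q.2.injective.eq_iff.symm

theorem main_bound (hgen : Subgroup.closure (Set.range s) = ⊤) (hs : ∀ j, s j ^ pp j = 1)
    (n : ℕ) (hn : 0 < n) (hU : ∀ σ : J → Perm (Fin n), (∀ j, σ j ^ pp j = 1) →
      ∃ φ : G →* Perm (Fin n), ∀ j, φ (s j) = σ j) (L : List (J × ℤ)) (ε : ℝ) (hε : 0 ≤ ε)
    (hb : ∑ σ : T pp n, ((Ffix L n σ).card : ℝ) ≤ ε * n * Fintype.card (T pp n)) :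
    subgroupExp G n (fun H => (fixedCosetCount (ev s L) H : ℝ)) ≤ ε * n := by
  classical
  let B := Equiv.ofBijective _ (toT_bij s hgen hs n hU)
  have hne : ∀ H : {H : Subgroup G // H.index = n}, Nonempty (G ⧸ H.1 ≃ Fin n) := by
    rintro ⟨H, hH⟩
    have hc : Nat.card (G ⧸ H) = n := hH
    have : Finite (G ⧸ H) := Nat.finite_of_card_ne_zero (by omega)
    exact ⟨Finite.equivFinOfCardEq hc⟩
  have hfin : Finite (SS G n) := Finite.of_equiv _ B.symm
  have hfinH : Finite {H : Subgroup G // H.index = n} :=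
    Finite.of_surjective (fun q : SS G n => q.1) fun H => ⟨⟨H, (hne H).some⟩, rfl⟩
  have := Fintype.ofFinite {H : Subgroup G // H.index = n}
  have hfe : ∀ H : {H : Subgroup G // H.index = n}, Fintype (G ⧸ H.1 ≃ Fin n) := fun H =>
    Fintype.ofEquiv (Perm (Fin n)) (Equiv.equivCongr (hne H).some.symm (Equiv.refl _))
  have hce : ∀ H : {H : Subgroup G // H.index = n}, Fintype.card (G ⧸ H.1 ≃ Fin n) = n.factorial := by
    intro H
    rw [Fintype.card_congr (Equiv.equivCongr (hne H).some (Equiv.refl (Fin n))), Fintype.card_perm]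
    simp
  have sumeq : ∀ (f : {H : Subgroup G // H.index = n} → ℝ) (f' : T pp n → ℝ),
      (∀ q : SS G n, f q.1 = f' (toT s hgen hs n q)) →
      (n.factorial : ℝ) * ∑ H, f H = n * ∑ σ, f' σ := by
    intro f f' hff
    calc (n.factorial : ℝ) * ∑ H, f H = ∑ H, ∑ _e : (G ⧸ H.1 ≃ Fin n), f H := by
          rw [Finset.mul_sum]
          refine Finset.sum_congr rfl fun H _ => ?_
          rw [Finset.sum_const, Finset.card_univ, hce, nsmul_eq_mul]
      _ = ∑ q : SS G n, f q.1 := by rw [Fintype.sum_sigma]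
      _ = ∑ q : T pp n × Fin n, f' q.1 := by
          refine Fintype.sum_equiv B _ _ fun q => ?_
          exact hff q
      _ = _ := by
          rw [Fintype.sum_prod_type]
          simp [Finset.mul_sum]
  have e1 := sumeq (fun H => (fixedCosetCount (ev s L) H.1 : ℝ)) (fun σ => ((Ffix L n σ).card : ℝ))
    (fun q => by rw [fix_eq s hgen hs n q L])
  have e2 := sumeq (fun _ => 1) (fun _ => 1) (fun _ => rfl)
  simp only [Finset.sum_const, Finset.card_univ, nsmul_eq_mul, mul_one] at e2
  rw [subgroupExp, tsum_fintype, Nat.card_eq_fintype_card]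
  refine div_le_of_le_mul₀ (by positivity) (by positivity) ?_
  have hf0 : (0 : ℝ) < n.factorial := by exact_mod_cast n.factorial_pos
  refine le_of_mul_le_mul_left ?_ hf0
  rw [e1]
  calc _ ≤ (n : ℝ) * (ε * n * Fintype.card (T pp n)) := by gcongr
    _ = ε * n * (n * Fintype.card (T pp n)) := by ring
    _ = _ := by rw [← e2]; ring

end group

end core
end IRSAux

theorem irs_limit_fuchsian (r m : ℕ) (p : Fin m → ℕ) (hp : ∀ i, 2 ≤ p i)
    (h : 0 < (r : ℝ) + (m : ℝ) - 1 - ∑ i, (1 : ℝ) / (p i : ℝ))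
    (g : FuchsianFreeProduct r m p) (hg : g ≠ 1) :
    (fun n : ℕ => subgroupExp (FuchsianFreeProduct r m p) n
        (fun H => (fixedCosetCount g H : ℝ))) =o[Filter.atTop] (fun n : ℕ => (n : ℝ)) := by
  let pp : Fin r ⊕ Fin m → ℕ := Sum.elim (fun _ => 0) p
  let s : Fin r ⊕ Fin m → FuchsianFreeProduct r m p := fun j => PresentedGroup.of j
  have hgen : Subgroup.closure (Set.range s) = ⊤ := PresentedGroup.closure_range_of _
  have hs : ∀ j, s j ^ pp j = 1 := by
    rintro (j | i)
    · simp [pp]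
    · have : (PresentedGroup.mk {w : FreeGroup (Fin r ⊕ Fin m) |
          ∃ i : Fin m, w = FreeGroup.of (Sum.inr i) ^ p i}) (FreeGroup.of (Sum.inr i) ^ p i) = 1 :=
        PresentedGroup.one_of_mem ⟨i, rfl⟩
      rw [map_pow] at this
      exact this
  obtain ⟨L, hL, hne, rfl⟩ := IRSAux.exists_red s hgen hs g hg
  have hsm := IRSAux.small_fix (pp := pp) L hL hne
  rw [Asymptotics.isLittleO_iff]
  intro ε hε
  filter_upwards [hsm ε hε, Filter.eventually_gt_atTop 0] with n hn hn0
  have hb := IRSAux.main_bound s hgen hs n hn0 (by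
    intro σ hσ
    refine ⟨PresentedGroup.toGroup (f := σ) ?_, fun j => PresentedGroup.toGroup.of _⟩
    rintro _ ⟨i, rfl⟩
    rw [map_pow, FreeGroup.lift_apply_of]
    exact hσ (Sum.inr i)) L ε hε.le hn
  have h0 : 0 ≤ subgroupExp (FuchsianFreeProduct r m p) n
      (fun H => (fixedCosetCount (IRSAux.ev s L) H : ℝ)) := by
    unfold subgroupExp
    exact div_nonneg (tsum_nonneg fun _ => Nat.cast_nonneg _) (Nat.cast_nonneg _)
  rw [Real.norm_of_nonneg h0, Real.norm_of_nonneg (Nat.cast_nonneg n)]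
  exact hb
end
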